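/- arXiv:1507.01143 — 3 statements merged into one kernel-verified Lean document; each statement's English description precedes it below -/
import Mathlib

section
/- Let u be a smooth function defined in the region K_{[2,s]} = {(t,x) : 4 ≤ t²-|x|² ≤ s², |x| < t-1} that is spatially compactly supported in K (its support at each time is contained in {|x| ≤ t-1}, vanishing near the boundary |x| = t-1). Then for all s ≥ 2: E_m(s,u)^{1/2} ≤ E_m(2,u)^{1/2} + ∫_2^s ‖□u‖_{L²_f(H_{s̄})} ds̄. -/
/-!
Use `(s, x)` as coordinates, the point being `hyp s x = (√(s² + |x|²), x)`. In these coordinates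
`∂_s u = (s/t) ∂_t u`, and `∂_a u` at fixed `s` is the semi-hyperboloidal derivative, so that
`E_m(s, u) = ∫ (∂_s u)² + Σ (∂_a u)² dx`. The wave operator becomes
`-□u = ∂_s² u - Σ ∂_a² u + (2/s) Σ x^a ∂_a ∂_s u + (3/s) ∂_s u` (`box_hyp`), and multiplying by
`2 ∂_s u` gives (`deriv_density`)

`∂_s ((∂_s u)² + Σ (∂_a u)²) = -2 ∂_s u □u + Σ ∂_a (2 ∂_s u ∂_a u - (2/s) x^a (∂_s u)²)`;

the zeroth order term `-(6/s) (∂_s u)²` is absorbed by the divergence of `x` in dimension three.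
The cone condition makes the trace of `u` on `H_s` compactly supported, locally uniformly in `s`
(`suppK_hyp`), so one may differentiate under the integral sign and the divergence integrates to
zero: `E_m' = -2 ∫ ∂_s u □u` (`hasDerivAt_Em`). By Cauchy–Schwarz `E_m' ≤ 2 √E_m ‖□u‖`
(`deriv_Em_le`), that is `(√E_m)' ≤ ‖□u‖`, which is integrated from `2` to `s`.
-/

noncomputable section

open MeasureTheory Real

def pd (α : Fin 4) (u : (Fin 4 → ℝ) → ℝ) : (Fin 4 → ℝ) → ℝ :=
  fun p => fderiv ℝ u p (Pi.single α 1)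

def pdI : List (Fin 4) → ((Fin 4 → ℝ) → ℝ) → ((Fin 4 → ℝ) → ℝ)
  | [], u => u
  | α :: I, u => pd α (pdI I u)

def Lb (a : Fin 3) (u : (Fin 4 → ℝ) → ℝ) : (Fin 4 → ℝ) → ℝ :=
  fun p => p a.succ * pd 0 u p + p 0 * pd a.succ u p

def LJ : List (Fin 3) → ((Fin 4 → ℝ) → ℝ) → ((Fin 4 → ℝ) → ℝ)
  | [], u => u
  | a :: J, u => Lb a (LJ J u)

def sdu (a : Fin 3) (u : (Fin 4 → ℝ) → ℝ) : (Fin 4 → ℝ) → ℝ :=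
  fun p => (p a.succ / p 0) * pd 0 u p + pd a.succ u p

def Box (u : (Fin 4 → ℝ) → ℝ) : (Fin 4 → ℝ) → ℝ :=
  fun p => -(pd 0 (pd 0 u) p) + ∑ a : Fin 3, pd a.succ (pd a.succ u) p

def rad (x : Fin 3 → ℝ) : ℝ := Real.sqrt (∑ a, (x a)^2)

def sp (p : Fin 4 → ℝ) : Fin 3 → ℝ := fun a => p a.succ

def hyp (s : ℝ) (x : Fin 3 → ℝ) : Fin 4 → ℝ :=
  Fin.cons (Real.sqrt (s^2 + ∑ a, (x a)^2)) x

def L2f (s : ℝ) (w : (Fin 4 → ℝ) → ℝ) : ℝ :=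
  Real.sqrt (∫ x : Fin 3 → ℝ, (w (hyp s x))^2)

def SuppK (u : (Fin 4 → ℝ) → ℝ) : Prop :=
  ∀ p : Fin 4 → ℝ, p 0 - 1 < rad (sp p) → u p = 0

def Em (s : ℝ) (u : (Fin 4 → ℝ) → ℝ) : ℝ :=
  ∫ x : Fin 3 → ℝ,
    (((s / hyp s x 0) * pd 0 u (hyp s x))^2 + ∑ a : Fin 3, (sdu a u (hyp s x))^2)

def Emc (c s : ℝ) (u : (Fin 4 → ℝ) → ℝ) : ℝ :=
  Em s u + c^2 * ∫ x : Fin 3 → ℝ, (u (hyp s x))^2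

def Kset : Set (Fin 4 → ℝ) := {p | rad (sp p) < p 0 - 1}

open Set Filter Topology

/-! ### Cartesian derivatives and the support condition -/

lemma contDiff_pd {u : (Fin 4 → ℝ) → ℝ} (hu : ContDiff ℝ (⊤ : ℕ∞) u) (α : Fin 4) :
    ContDiff ℝ (⊤ : ℕ∞) (pd α u) := by
  have h : ContDiff ℝ (⊤ : ℕ∞) (fderiv ℝ u) := hu.fderiv_right (by simp)
  exact h.clm_apply contDiff_const

lemma pd_comm {u : (Fin 4 → ℝ) → ℝ} (hu : ContDiff ℝ (⊤ : ℕ∞) u) (α β : Fin 4)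
    (p : Fin 4 → ℝ) : pd α (pd β u) p = pd β (pd α u) p := by
  have hd : DifferentiableAt ℝ (fderiv ℝ u) p :=
    ((hu.fderiv_right (m := (⊤ : ℕ∞)) (by simp)).differentiable (by simp)) p
  have key : ∀ α β : Fin 4, pd α (pd β u) p
      = fderiv ℝ (fderiv ℝ u) p (Pi.single α 1) (Pi.single β 1) := by
    intro α β
    have := (hd.hasFDerivAt.clm_apply (hasFDerivAt_const (Pi.single β (1 : ℝ)) p)).fderiv
    change fderiv ℝ (fun y => fderiv ℝ u y (Pi.single β 1)) p (Pi.single α 1) = _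
    rw [this]
    simp
  rw [key, key]
  exact second_derivative_symmetric (f := u) (fun y => ((hu.differentiable (by simp)) y).hasFDerivAt)
    hd.hasFDerivAt _ _

lemma suppK_pd {u : (Fin 4 → ℝ) → ℝ} (h : SuppK u) (α : Fin 4) : SuppK (pd α u) := by
  intro p hp
  have hopen : IsOpen {q : Fin 4 → ℝ | q 0 - 1 < rad (sp q)} := by
    apply isOpen_lt (by fun_prop)
    unfold rad sp
    fun_prop
  have : u =ᶠ[𝓝 p] fun _ => 0 := by
    filter_upwards [hopen.mem_nhds hp] with q hq using h q hq
  simp [pd, this.fderiv_eq]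

lemma norm_le_rad (x : Fin 3 → ℝ) : ‖x‖ ≤ rad x := by
  refine (pi_norm_le_iff_of_nonneg (Real.sqrt_nonneg _)).2 ?_
  intro i
  rw [Real.norm_eq_abs]
  apply Real.abs_le_sqrt
  exact Finset.single_le_sum (f := fun a => (x a)^2) (fun a _ => sq_nonneg _) (Finset.mem_univ i)

/-- On `H_s` with `s ≤ M`, the cone condition `r ≤ t - 1` forces `r ≤ (s² - 1) / 2 ≤ M²`, so the
trace on `H_s` of a function supported in the cone lives in one fixed ball. -/
lemma suppK_hyp {w : (Fin 4 → ℝ) → ℝ} (h : SuppK w) {M s : ℝ} (hs : 0 ≤ s) (hM : s ≤ M)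
    {x : Fin 3 → ℝ} (hx : x ∉ Metric.closedBall (0 : Fin 3 → ℝ) (M^2)) : w (hyp s x) = 0 := by
  apply h
  have h1 : M^2 < rad x := by
    have : M^2 < ‖x‖ := by simpa using hx
    exact this.trans_le (norm_le_rad x)
  have h2 : sp (hyp s x) = x := by ext a; simp [sp, hyp]
  have h3 : hyp s x 0 = Real.sqrt (s^2 + rad x ^2) := by
    simp [hyp, rad, Real.sq_sqrt (Finset.sum_nonneg (fun a _ => sq_nonneg (x a)))]
  rw [h2, h3, sub_lt_iff_lt_add]
  have h4 : 0 ≤ rad x := Real.sqrt_nonneg _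
  rw [Real.sqrt_lt' (by linarith)]
  nlinarith

/-! ### The chain rule in the coordinates `(s, x)` -/

lemma hyp_zero_sq (s : ℝ) (x : Fin 3 → ℝ) : (hyp s x 0)^2 = s^2 + ∑ a, (x a)^2 := by
  simp only [hyp, Fin.cons_zero]
  exact Real.sq_sqrt (by positivity)

lemma hyp_zero_pos {s : ℝ} (hs : 0 < s) (x : Fin 3 → ℝ) : 0 < hyp s x 0 := by
  simp only [hyp, Fin.cons_zero]
  positivity

@[simp] lemma hyp_succ (s : ℝ) (x : Fin 3 → ℝ) (a : Fin 3) : hyp s x a.succ = x a := by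
  simp [hyp]

lemma continuous_hyp : Continuous fun q : ℝ × (Fin 3 → ℝ) => hyp q.1 q.2 := by
  refine continuous_pi fun i => ?_
  refine Fin.cases ?_ (fun a => ?_) i
  · simp only [hyp, Fin.cons_zero]
    fun_prop
  · simp only [hyp_succ]
    fun_prop

/-- In the coordinates `(s, x)`, the time of the point of `H_s` above `x` has `s`-derivative
`s / t`. -/
lemma hasDerivAt_time_s {s : ℝ} (hs : 0 < s) (x : Fin 3 → ℝ) :
    HasDerivAt (fun σ => hyp σ x 0) (s / hyp s x 0) s := by
  have hp : s^2 + ∑ a, (x a)^2 ≠ 0 := by positivity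
  have h1 : HasDerivAt (fun σ : ℝ => σ^2 + ∑ a, (x a)^2) (2 * s) s := by
    simpa using ((hasDerivAt_id s).pow 2).add_const (∑ a, (x a)^2)
  have h := h1.sqrt hp
  simp only [hyp, Fin.cons_zero]
  convert h using 1
  field_simp

lemma hasDerivAt_time_x {s : ℝ} (hs : 0 < s) (x : Fin 3 → ℝ) (a : Fin 3) :
    HasLineDerivAt ℝ (fun y => hyp s y 0) (x a / hyp s x 0) x (Pi.single a 1) := by
  have hp : s^2 + ∑ a, (x a)^2 ≠ 0 := by positivity
  have h1 : HasFDerivAt (fun y : Fin 3 → ℝ => s^2 + ∑ b, (y b)^2)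
      (∑ b, (2 * x b) • (ContinuousLinearMap.proj b : (Fin 3 → ℝ) →L[ℝ] ℝ)) x := by
    refine HasFDerivAt.const_add _ ?_
    refine HasFDerivAt.fun_sum fun b _ => ?_
    simpa using (hasFDerivAt_apply (𝕜 := ℝ) b x).pow 2
  have h := (h1.sqrt hp).hasLineDerivAt (Pi.single a 1)
  simp only [hyp, Fin.cons_zero]
  have h2 : (1 / (2 * √(s^2 + ∑ b, (x b)^2))) •
      (∑ b, (2 * x b) • (ContinuousLinearMap.proj b : (Fin 3 → ℝ) →L[ℝ] ℝ)) (Pi.single a 1)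
      = x a / √(s^2 + ∑ b, (x b)^2) := by
    simp [Pi.single_apply]
    field_simp
  rw [← h2]
  exact h

/-- `∂_s [w(s, x)] = (s/t) ∂_t w`. -/
lemma hasDerivAt_comp_s {w : (Fin 4 → ℝ) → ℝ} (hw : Differentiable ℝ w) {s : ℝ} (hs : 0 < s)
    (x : Fin 3 → ℝ) :
    HasDerivAt (fun σ => w (hyp σ x)) (s / hyp s x 0 * pd 0 w (hyp s x)) s := by
  have h1 : HasDerivAt (fun σ => hyp σ x) ((s / hyp s x 0) • (Pi.single 0 1 : Fin 4 → ℝ)) s := by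
    rw [hasDerivAt_pi]
    refine fun i => Fin.cases ?_ (fun b => ?_) i
    · simpa using hasDerivAt_time_s hs x
    · simpa using hasDerivAt_const s (x b)
  have h2 := (hw (hyp s x)).hasFDerivAt.comp_hasDerivAt s h1
  have h3 : fderiv ℝ w (hyp s x) ((s / hyp s x 0) • (Pi.single 0 1 : Fin 4 → ℝ))
      = s / hyp s x 0 * pd 0 w (hyp s x) := by simp [pd]
  rw [← h3]
  exact h2

/-- `∂_a [w(s, x)]` at fixed `s` is the semi-hyperboloidal derivative of `w`. -/
lemma hasLineDerivAt_comp_x {w : (Fin 4 → ℝ) → ℝ} (hw : Differentiable ℝ w) {s : ℝ} (hs : 0 < s)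
    (x : Fin 3 → ℝ) (a : Fin 3) :
    HasLineDerivAt ℝ (fun y => w (hyp s y)) (sdu a w (hyp s x)) x (Pi.single a 1) := by
  have h1 : HasDerivAt (fun h : ℝ => hyp s (x + h • Pi.single a 1))
      ((x a / hyp s x 0) • (Pi.single 0 1 : Fin 4 → ℝ) + Pi.single a.succ 1) 0 := by
    rw [hasDerivAt_pi]
    refine fun i => Fin.cases ?_ (fun b => ?_) i
    · simpa [HasLineDerivAt] using hasDerivAt_time_x hs x a
    · have := ((hasDerivAt_id (0 : ℝ)).mul_const ((Pi.single a 1 : Fin 3 → ℝ) b)).const_add (x b)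
      simpa [Pi.single_apply] using this
  have h0 : hyp s (x + (0 : ℝ) • Pi.single a 1) = hyp s x := by simp
  have h2 := (hw (hyp s (x + (0 : ℝ) • Pi.single a 1))).hasFDerivAt.comp_hasDerivAt (0 : ℝ) h1
  rw [h0] at h2
  have h3 : fderiv ℝ w (hyp s x)
      ((x a / hyp s x 0) • (Pi.single 0 1 : Fin 4 → ℝ) + Pi.single a.succ 1)
      = sdu a w (hyp s x) := by simp [pd, sdu]
  rw [← h3]
  exact h2

/-! ### Integrals over hyperboloids -/

/-- Functions of `(s, x)`, continuous for `s > 0`, whose restrictions to `s ≤ M` are supported in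
the fixed ball of radius `M ^ 2`; traces on the hyperboloids of functions supported in the cone are
of this kind. -/
def ConeTrace (f : ℝ → (Fin 3 → ℝ) → ℝ) : Prop :=
  ContinuousOn (Function.uncurry f) (Ioi 0 ×ˢ univ) ∧
    ∀ M s : ℝ, 0 < s → s ≤ M → ∀ x ∉ Metric.closedBall (0 : Fin 3 → ℝ) (M^2), f s x = 0

namespace ConeTrace

variable {f g : ℝ → (Fin 3 → ℝ) → ℝ}

lemma comp_hyp {w : (Fin 4 → ℝ) → ℝ} (hw : Continuous w) (h : SuppK w) :
    ConeTrace fun s x => w (hyp s x) :=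
  ⟨(hw.comp continuous_hyp).continuousOn, fun _ _ hs hM _ hx => suppK_hyp h hs.le hM hx⟩

lemma coeff_mul {c : ℝ → (Fin 3 → ℝ) → ℝ}
    (hc : ContinuousOn (Function.uncurry c) (Ioi 0 ×ˢ univ)) (hf : ConeTrace f) :
    ConeTrace fun s x => c s x * f s x :=
  ⟨hc.mul hf.1, fun M s hs hM x hx => by simp [hf.2 M s hs hM x hx]⟩

lemma mul (hf : ConeTrace f) (hg : ConeTrace g) : ConeTrace fun s x => f s x * g s x :=
  hg.coeff_mul hf.1

lemma const_mul (c : ℝ) (hf : ConeTrace f) : ConeTrace fun s x => c * f s x :=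
  hf.coeff_mul (c := fun _ _ => c) continuousOn_const

lemma sq (hf : ConeTrace f) : ConeTrace fun s x => (f s x)^2 := by
  simpa only [pow_two] using hf.mul hf

lemma add (hf : ConeTrace f) (hg : ConeTrace g) : ConeTrace fun s x => f s x + g s x :=
  ⟨hf.1.add hg.1, fun M s hs hM x hx => by simp [hf.2 M s hs hM x hx, hg.2 M s hs hM x hx]⟩

lemma sub (hf : ConeTrace f) (hg : ConeTrace g) : ConeTrace fun s x => f s x - g s x :=
  ⟨hf.1.sub hg.1, fun M s hs hM x hx => by simp [hf.2 M s hs hM x hx, hg.2 M s hs hM x hx]⟩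

lemma sum {F : Fin 3 → ℝ → (Fin 3 → ℝ) → ℝ} (hF : ∀ a, ConeTrace (F a)) :
    ConeTrace fun s x => ∑ a, F a s x :=
  ⟨continuousOn_finsetSum _ fun a _ => (hF a).1,
    fun M s hs hM x hx => Finset.sum_eq_zero fun a _ => (hF a).2 M s hs hM x hx⟩

lemma continuous (hf : ConeTrace f) {s : ℝ} (hs : 0 < s) : Continuous (f s) := by
  have : Continuous fun x : Fin 3 → ℝ => (s, x) := by fun_prop
  exact hf.1.comp_continuous this fun x => ⟨hs, mem_univ x⟩

lemma integrable (hf : ConeTrace f) {s : ℝ} (hs : 0 < s) : Integrable (f s) :=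
  (hf.continuous hs).integrable_of_hasCompactSupport
    (HasCompactSupport.intro (isCompact_closedBall 0 (s^2)) (hf.2 s s hs le_rfl))

lemma continuousOn_integral (hf : ConeTrace f) (a b : ℝ) (ha : 0 < a) :
    ContinuousOn (fun s => ∫ x, f s x) (Icc a b) :=
  continuousOn_integral_of_compact_support (isCompact_closedBall (0 : Fin 3 → ℝ) (b^2))
    (hf.1.mono (prod_mono (fun _ hs => ha.trans_le hs.1) subset_rfl))
    fun s x hs hx => hf.2 b s (ha.trans_le hs.1) hs.2 x hx

/-- Differentiation under the integral sign. -/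
lemma hasDerivAt_integral (hf : ConeTrace f) (hg : ConeTrace g)
    (hd : ∀ s : ℝ, 0 < s → ∀ x, HasDerivAt (fun σ => f σ x) (g s x) s) {s : ℝ} (hs : 0 < s) :
    HasDerivAt (fun σ => ∫ x, f σ x) (∫ x, g s x) s := by
  set K := Metric.closedBall (0 : Fin 3 → ℝ) ((s + 1)^2) with hK
  have hcK : IsCompact K := isCompact_closedBall _ _
  obtain ⟨C, hC⟩ := ((isCompact_Icc (a := s/2) (b := s + 1)).prod hcK).exists_bound_of_continuousOn
    (hg.1.mono (prod_mono (fun σ hσ => (half_pos hs).trans_le hσ.1) (subset_univ _)))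
  have hpos : ∀ σ ∈ Icc (s/2) (s + 1), 0 < σ := fun σ hσ => (half_pos hs).trans_le hσ.1
  refine (hasDerivAt_integral_of_dominated_loc_of_deriv_le (s := Icc (s/2) (s + 1))
    (bound := K.indicator fun _ => C) (Icc_mem_nhds (by linarith) (by linarith)) ?_
    (hf.integrable hs) (hg.continuous hs).aestronglyMeasurable ?_ ?_ ?_).2
  · filter_upwards [Ioi_mem_nhds hs] with σ hσ
    exact (hf.continuous hσ).aestronglyMeasurable
  · refine Eventually.of_forall fun x σ hσ => ?_
    by_cases hx : x ∈ K
    · rw [indicator_of_mem hx]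
      exact hC (σ, x) ⟨hσ, hx⟩
    · rw [indicator_of_notMem hx, hg.2 (s + 1) σ (hpos σ hσ) hσ.2 x hx, norm_zero]
  · exact (integrable_indicator_iff hcK.measurableSet).2 (integrableOn_const hcK.measure_ne_top)
  · exact Eventually.of_forall fun x σ hσ => hd σ (hpos σ hσ) x

end ConeTrace

lemma integral_lineDeriv_eq_zero {f f' : (Fin 3 → ℝ) → ℝ} {v : Fin 3 → ℝ} (hf : Integrable f)
    (hf' : Integrable f') (hd : ∀ x, HasLineDerivAt ℝ f (f' x) x v) : ∫ x, f' x = 0 := by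
  have h := integral_bilinear_hasLineDerivAt_right_eq_neg_left_of_integrable (μ := volume)
    (f := fun _ : Fin 3 → ℝ => (1 : ℝ)) (f' := fun _ => 0) (g := f) (g' := f') (v := v)
    (B := ContinuousLinearMap.mul ℝ ℝ) (by simp) (by simpa using hf') (by simpa using hf)
    (fun x _ => by simpa [HasLineDerivAt] using hasDerivAt_const (0 : ℝ) (1 : ℝ))
    (fun x _ => hd x)
  simpa using h

/-- Cauchy–Schwarz. -/
lemma abs_integral_mul_le {f g : (Fin 3 → ℝ) → ℝ} (hf : Integrable fun x => (f x)^2)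
    (hg : Integrable fun x => (g x)^2) (hfg : Integrable fun x => f x * g x) :
    |∫ x, f x * g x| ≤ √(∫ x, (f x)^2) * √(∫ x, (g x)^2) := by
  have h0 : 0 ≤ ∫ x, (f x)^2 := integral_nonneg fun x => sq_nonneg _
  have h : discrim (∫ x, (f x)^2) (2 * ∫ x, f x * g x) (∫ x, (g x)^2) ≤ 0 := by
    refine discrim_le_zero fun l => ?_
    have : ∫ x, (l * f x + g x)^2
        = (∫ x, (f x)^2) * (l * l) + (2 * ∫ x, f x * g x) * l + ∫ x, (g x)^2 := by
      have e : ∀ x, (l * f x + g x)^2 = (l * l) * (f x)^2 + (2 * l) * (f x * g x) + (g x)^2 :=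
        fun x => by ring
      simp_rw [e]
      have i : Integrable fun x => (l * l) * (f x)^2 + (2 * l) * (f x * g x) :=
        (hf.const_mul _).add (hfg.const_mul _)
      rw [integral_add i hg,
        integral_add (hf.const_mul _) (hfg.const_mul _), integral_const_mul, integral_const_mul]
      ring
    rw [← this]
    exact integral_nonneg fun x => sq_nonneg _
  rw [← Real.sqrt_mul h0]
  apply Real.abs_le_sqrt
  unfold discrim at h
  linarith

/-! ### The energy identity -/

section Energy

variable {u : (Fin 4 → ℝ) → ℝ}

lemma continuousOn_time_inv :
    ContinuousOn (fun q : ℝ × (Fin 3 → ℝ) => (hyp q.1 q.2 0)⁻¹) (Ioi 0 ×ˢ univ) :=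
  ((continuous_apply 0).comp continuous_hyp).continuousOn.inv₀
    fun q hq => (hyp_zero_pos hq.1 q.2).ne'

/-- `∂_s u` in the coordinates `(s, x)`, that is `(s/t) ∂_t u`. -/
def velS (u : (Fin 4 → ℝ) → ℝ) (s : ℝ) (x : Fin 3 → ℝ) : ℝ :=
  s / hyp s x 0 * pd 0 u (hyp s x)

/-- `∂_s ∂_s u` in the coordinates `(s, x)`, expressed through Cartesian derivatives. -/
def accS (u : (Fin 4 → ℝ) → ℝ) (s : ℝ) (x : Fin 3 → ℝ) : ℝ :=
  ((hyp s x 0)⁻¹ - s^2 * (hyp s x 0)⁻¹^3) * pd 0 u (hyp s x)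
    + s^2 * (hyp s x 0)⁻¹^2 * pd 0 (pd 0 u) (hyp s x)

/-- `∂_a ∂_s u` in the coordinates `(s, x)`, expressed through Cartesian derivatives. -/
def mixS (u : (Fin 4 → ℝ) → ℝ) (a : Fin 3) (s : ℝ) (x : Fin 3 → ℝ) : ℝ :=
  -(s * x a * (hyp s x 0)⁻¹^3) * pd 0 u (hyp s x)
    + s * (hyp s x 0)⁻¹ * sdu a (pd 0 u) (hyp s x)

/-- `∂_a ∂_a u` in the coordinates `(s, x)`, expressed through Cartesian derivatives. -/
def hessS (u : (Fin 4 → ℝ) → ℝ) (a : Fin 3) (s : ℝ) (x : Fin 3 → ℝ) : ℝ :=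
  ((hyp s x 0)⁻¹ - (x a)^2 * (hyp s x 0)⁻¹^3) * pd 0 u (hyp s x)
    + x a * (hyp s x 0)⁻¹ * sdu a (pd 0 u) (hyp s x) + sdu a (pd a.succ u) (hyp s x)

lemma hasDerivAt_velS (hu : ContDiff ℝ (⊤ : ℕ∞) u) {s : ℝ} (hs : 0 < s) (x : Fin 3 → ℝ) :
    HasDerivAt (fun σ => velS u σ x) (accS u s x) s := by
  have hT := (hyp_zero_pos hs x).ne'
  have h := ((hasDerivAt_id s).fun_div (hasDerivAt_time_s hs x) hT).fun_mul
    (hasDerivAt_comp_s ((contDiff_pd hu 0).differentiable (by simp)) hs x)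
  refine h.congr_deriv ?_
  simp only [accS, id]
  field_simp

lemma hasLineDerivAt_velS (hu : ContDiff ℝ (⊤ : ℕ∞) u) {s : ℝ} (hs : 0 < s) (x : Fin 3 → ℝ)
    (a : Fin 3) : HasLineDerivAt ℝ (velS u s) (mixS u a s x) x (Pi.single a 1) := by
  have hT := (hyp_zero_pos hs x).ne'
  have hT' : hyp s (x + (0 : ℝ) • Pi.single a 1) 0 ≠ 0 := by simpa using hT
  have h := ((hasDerivAt_const (0 : ℝ) s).fun_div (hasDerivAt_time_x hs x a) hT').fun_mul
    (hasLineDerivAt_comp_x ((contDiff_pd hu 0).differentiable (by simp)) hs x a)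
  refine HasDerivAt.congr_deriv h ?_
  simp only [mixS, zero_smul, add_zero]
  field_simp
  ring

lemma hasDerivAt_sdu (hu : ContDiff ℝ (⊤ : ℕ∞) u) {s : ℝ} (hs : 0 < s) (x : Fin 3 → ℝ)
    (a : Fin 3) : HasDerivAt (fun σ => sdu a u (hyp σ x)) (mixS u a s x) s := by
  have hT := (hyp_zero_pos hs x).ne'
  have h := (((hasDerivAt_const s (x a)).fun_div (hasDerivAt_time_s hs x) hT).fun_mul
    (hasDerivAt_comp_s ((contDiff_pd hu 0).differentiable (by simp)) hs x)).fun_add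
    (hasDerivAt_comp_s ((contDiff_pd hu a.succ).differentiable (by simp)) hs x)
  simp only [sdu, hyp_succ]
  refine h.congr_deriv ?_
  simp only [mixS, sdu, hyp_succ, pd_comm hu a.succ 0]
  field_simp
  ring

lemma hasLineDerivAt_sdu (hu : ContDiff ℝ (⊤ : ℕ∞) u) {s : ℝ} (hs : 0 < s) (x : Fin 3 → ℝ)
    (a : Fin 3) :
    HasLineDerivAt ℝ (fun y => sdu a u (hyp s y)) (hessS u a s x) x (Pi.single a 1) := by
  have hT := (hyp_zero_pos hs x).ne'
  have hT' : hyp s (x + (0 : ℝ) • Pi.single a 1) 0 ≠ 0 := by simpa using hT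
  have hx : HasDerivAt (fun h : ℝ => (x + h • (Pi.single a 1 : Fin 3 → ℝ)) a) 1 0 := by
    simpa using (hasDerivAt_id (0 : ℝ)).const_add (x a)
  have h := ((hx.fun_div (hasDerivAt_time_x hs x a) hT').fun_mul
    (hasLineDerivAt_comp_x ((contDiff_pd hu 0).differentiable (by simp)) hs x a)).fun_add
    (hasLineDerivAt_comp_x ((contDiff_pd hu a.succ).differentiable (by simp)) hs x a)
  simp only [sdu, hyp_succ]
  refine HasDerivAt.congr_deriv h ?_
  simp only [hessS, sdu, hyp_succ, zero_smul, add_zero]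
  field_simp

lemma coneTrace_pd (hu : ContDiff ℝ (⊤ : ℕ∞) u) (h : SuppK u) (α : Fin 4) :
    ConeTrace fun s x => pd α u (hyp s x) :=
  ConeTrace.comp_hyp (contDiff_pd hu α).continuous (suppK_pd h α)

lemma coneTrace_sdu (hu : ContDiff ℝ (⊤ : ℕ∞) u) (h : SuppK u) (a : Fin 3) :
    ConeTrace fun s x => sdu a u (hyp s x) := by
  have hT := continuousOn_time_inv
  simp only [sdu, hyp_succ, div_eq_mul_inv]
  refine ((coneTrace_pd hu h 0).coeff_mul (c := fun s x => x a * (hyp s x 0)⁻¹) ?_).add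
    (coneTrace_pd hu h a.succ)
  simp only [Function.uncurry_def]
  fun_prop

lemma coneTrace_velS (hu : ContDiff ℝ (⊤ : ℕ∞) u) (h : SuppK u) : ConeTrace (velS u) := by
  have hT := continuousOn_time_inv
  refine (coneTrace_pd hu h 0).coeff_mul (c := fun s x => s / (hyp s x 0)) ?_
  simp only [Function.uncurry_def, div_eq_mul_inv]
  fun_prop

lemma coneTrace_accS (hu : ContDiff ℝ (⊤ : ℕ∞) u) (h : SuppK u) : ConeTrace (accS u) := by
  have hT := continuousOn_time_inv
  refine ((coneTrace_pd hu h 0).coeff_mul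
    (c := fun s x => (hyp s x 0)⁻¹ - s^2 * (hyp s x 0)⁻¹^3) ?_).add
    ((coneTrace_pd (contDiff_pd hu 0) (suppK_pd h 0) 0).coeff_mul
    (c := fun s x => s^2 * (hyp s x 0)⁻¹^2) ?_) <;>
  · simp only [Function.uncurry_def]
    fun_prop

lemma coneTrace_mixS (hu : ContDiff ℝ (⊤ : ℕ∞) u) (h : SuppK u) (a : Fin 3) :
    ConeTrace (mixS u a) := by
  have hT := continuousOn_time_inv
  refine ((coneTrace_pd hu h 0).coeff_mul
    (c := fun s x => -(s * x a * (hyp s x 0)⁻¹^3)) ?_).add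
    ((coneTrace_sdu (contDiff_pd hu 0) (suppK_pd h 0) a).coeff_mul
    (c := fun s x => s * (hyp s x 0)⁻¹) ?_) <;>
  · simp only [Function.uncurry_def]
    fun_prop

lemma coneTrace_hessS (hu : ContDiff ℝ (⊤ : ℕ∞) u) (h : SuppK u) (a : Fin 3) :
    ConeTrace (hessS u a) := by
  have hT := continuousOn_time_inv
  refine (((coneTrace_pd hu h 0).coeff_mul
    (c := fun s x => (hyp s x 0)⁻¹ - (x a)^2 * (hyp s x 0)⁻¹^3) ?_).add
    ((coneTrace_sdu (contDiff_pd hu 0) (suppK_pd h 0) a).coeff_mul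
    (c := fun s x => x a * (hyp s x 0)⁻¹) ?_)).add
    (coneTrace_sdu (contDiff_pd hu a.succ) (suppK_pd h a.succ) a) <;>
  · simp only [Function.uncurry_def]
    fun_prop

lemma coneTrace_box (hu : ContDiff ℝ (⊤ : ℕ∞) u) (h : SuppK u) :
    ConeTrace fun s x => Box u (hyp s x) := by
  have h2 : ∀ α, ConeTrace fun s x => pd α (pd α u) (hyp s x) := fun α =>
    coneTrace_pd (contDiff_pd hu α) (suppK_pd h α) α
  simpa [Box] using ((h2 0).const_mul (-1)).add (ConeTrace.sum fun a : Fin 3 => h2 a.succ)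

/-- The wave operator in the coordinates `(s, x)`:
`-□u = ∂_s² u - Σ ∂_a² u + (2/s) Σ x^a ∂_a ∂_s u + (3/s) ∂_s u`. -/
lemma box_hyp (hu : ContDiff ℝ (⊤ : ℕ∞) u) {s : ℝ} (hs : 0 < s) (x : Fin 3 → ℝ) :
    -Box u (hyp s x) = accS u s x - ∑ a, hessS u a s x
      + 2 / s * ∑ a, x a * mixS u a s x + 3 / s * velS u s x := by
  have hT := (hyp_zero_pos hs x).ne'
  have hT2 := hyp_zero_sq s x
  simp only [Box, accS, hessS, mixS, velS, sdu, hyp_succ, Fin.sum_univ_three,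
    pd_comm hu 0 (Fin.succ _)] at *
  generalize hyp s x 0 = T at *
  have hs2 : s^2 = T^2 - ((x 0)^2 + (x 1)^2 + (x 2)^2) := by linarith
  field_simp
  rw [hs2]
  ring

/-- The vector field multiplier identity: the `s`-derivative of the energy density,
`2 ((∂_s u) ∂_s² u + Σ ∂_a u ∂_a ∂_s u)`, is a source term plus a divergence in `x`. -/
lemma deriv_density (hu : ContDiff ℝ (⊤ : ℕ∞) u) {s : ℝ} (hs : 0 < s) (x : Fin 3 → ℝ) :
    2 * (velS u s x * accS u s x) + ∑ a, 2 * (sdu a u (hyp s x) * mixS u a s x)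
      = -2 * (velS u s x * Box u (hyp s x))
        + ∑ a, (2 * (mixS u a s x * sdu a u (hyp s x) + velS u s x * hessS u a s x)
          - 2 / s * ((velS u s x)^2 + x a * (2 * (velS u s x * mixS u a s x)))) := by
  have hb := box_hyp hu hs x
  rw [show Box u (hyp s x) = -(-Box u (hyp s x)) by ring, hb]
  simp only [Fin.sum_univ_three]
  ring

/-- Each component of the divergence, `∂_a (2 ∂_s u ∂_a u - (2/s) x^a (∂_s u)²)`, has zero integral
over `H_s`. -/
lemma integral_flux (hu : ContDiff ℝ (⊤ : ℕ∞) u) (h : SuppK u) {s : ℝ} (hs : 0 < s)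
    (a : Fin 3) :
    Integrable (fun x => 2 * (mixS u a s x * sdu a u (hyp s x) + velS u s x * hessS u a s x)
          - 2 / s * ((velS u s x)^2 + x a * (2 * (velS u s x * mixS u a s x)))) ∧
    ∫ x, (2 * (mixS u a s x * sdu a u (hyp s x) + velS u s x * hessS u a s x)
          - 2 / s * ((velS u s x)^2 + x a * (2 * (velS u s x * mixS u a s x)))) = 0 := by
  have hA := coneTrace_velS hu h
  have hB := coneTrace_sdu hu h a
  have hM := coneTrace_mixS hu h a
  have hH := coneTrace_hessS hu h a
  have hX : ContinuousOn (Function.uncurry fun (_ : ℝ) (x : Fin 3 → ℝ) => x a)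
      (Ioi 0 ×ˢ univ) := by
    simp only [Function.uncurry_def]
    fun_prop
  have i2 := ((((hM.mul hB).add (hA.mul hH)).const_mul 2).sub
    ((hA.sq.add (((hA.mul hM).const_mul 2).coeff_mul hX)).const_mul (2 / s))).integrable hs
  refine ⟨i2, ?_⟩
  have i1 := (((hA.mul hB).const_mul 2).sub
    ((hA.sq.coeff_mul hX).const_mul (2 / s))).integrable hs
  refine integral_lineDeriv_eq_zero (v := Pi.single a 1) i1 i2 fun x => ?_
  have dA := hasLineDerivAt_velS hu hs x a
  have dB := hasLineDerivAt_sdu hu hs x a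
  have dX : HasDerivAt (fun h : ℝ => (x + h • (Pi.single a 1 : Fin 3 → ℝ)) a) 1 0 := by
    simpa using (hasDerivAt_id (0 : ℝ)).const_add (x a)
  unfold HasLineDerivAt at *
  refine (((dA.fun_mul dB).const_mul 2).fun_sub
    ((dX.fun_mul (dA.fun_pow 2)).const_mul (2 / s))).congr_deriv ?_
  simp only [zero_smul, add_zero]
  push_cast
  ring

/-- The energy identity `d/ds E_m(s,u) = -2 ∫ ((s/t) ∂_t u) □u`. -/
lemma hasDerivAt_Em (hu : ContDiff ℝ (⊤ : ℕ∞) u) (h : SuppK u) {s : ℝ} (hs : 0 < s) :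
    HasDerivAt (fun σ => Em σ u) (-2 * ∫ x, velS u s x * Box u (hyp s x)) s := by
  have hA := coneTrace_velS hu h
  have hB := coneTrace_sdu hu h
  have hd := ConeTrace.hasDerivAt_integral (hA.sq.add (ConeTrace.sum fun a => (hB a).sq))
    (((hA.mul (coneTrace_accS hu h)).const_mul 2).add (ConeTrace.sum fun a =>
      (((hB a).mul (coneTrace_mixS hu h a)).const_mul 2))) (fun σ hσ x => by
        refine (((hasDerivAt_velS hu hσ x).fun_pow 2).fun_add (HasDerivAt.fun_sum fun a _ =>
          (hasDerivAt_sdu hu hσ x a).fun_pow 2)).congr_deriv ?_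
        simp only [Fin.sum_univ_three]
        push_cast
        ring) hs
  refine HasDerivAt.congr_deriv hd ?_
  simp_rw [deriv_density hu hs]
  have hf := fun a => integral_flux hu h hs a
  rw [integral_add (((hA.mul (coneTrace_box hu h)).const_mul (-2)).integrable hs)
    (integrable_finsetSum _ fun a _ => (hf a).1), integral_const_mul,
    integral_finsetSum _ fun a _ => (hf a).1, Finset.sum_eq_zero fun a _ => (hf a).2, add_zero]

lemma Em_nonneg (s : ℝ) (u : (Fin 4 → ℝ) → ℝ) : 0 ≤ Em s u :=
  integral_nonneg fun _ => add_nonneg (sq_nonneg _) (Finset.sum_nonneg fun _ _ => sq_nonneg _)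

lemma deriv_Em_le (hu : ContDiff ℝ (⊤ : ℕ∞) u) (h : SuppK u) {s : ℝ} (hs : 0 < s) :
    -2 * ∫ x, velS u s x * Box u (hyp s x) ≤ 2 * (√(Em s u) * L2f s (Box u)) := by
  have hA := coneTrace_velS hu h
  have hB := coneTrace_sdu hu h
  have hF := coneTrace_box hu h
  have hcs := abs_integral_mul_le (hA.sq.integrable hs) (hF.sq.integrable hs)
    ((hA.mul hF).integrable hs)
  have hle : ∫ x, (velS u s x)^2 ≤ Em s u :=
    integral_mono (hA.sq.integrable hs)
      ((hA.sq.add (ConeTrace.sum fun a => (hB a).sq)).integrable hs)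
      fun x => le_add_of_nonneg_right (Finset.sum_nonneg fun a _ => sq_nonneg _)
  have h1 : √(∫ x, (velS u s x)^2) * L2f s (Box u) ≤ √(Em s u) * L2f s (Box u) :=
    mul_le_mul_of_nonneg_right (Real.sqrt_le_sqrt hle) (Real.sqrt_nonneg _)
  have h2 := (abs_le.1 hcs).1
  unfold L2f at *
  linarith

end Energy

/-! ### Integration of the differential inequality -/

/-- Proposition 2.1, part 1: energy estimate for the flat wave
operator along the hyperboloidal foliation:
`E_m(s,u)^{1/2} ≤ E_m(2,u)^{1/2} + ∫_2^s ‖□u‖_{L²_f(H_s̄)} ds̄`. -/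
theorem hyperboloidal_energy_estimate_wave
    (u : (Fin 4 → ℝ) → ℝ) (hu : ContDiff ℝ (⊤ : ℕ∞) u) (hsupp : SuppK u) :
    ∀ s : ℝ, 2 ≤ s →
      Real.sqrt (Em s u) ≤ Real.sqrt (Em 2 u) + ∫ t in (2:ℝ)..s, L2f t (Box u) := by
  intro s hs
  refine le_of_forall_pos_le_add fun δ hδ => ?_
  -- `√E` may fail to be differentiable where `E` vanishes, so `√(E + δ²)` is used instead.
  have hpos : ∀ σ, 0 < Em σ u + δ^2 := fun σ => by
    have := Em_nonneg σ u
    positivity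
  have hd : ∀ σ, 2 ≤ σ → HasDerivAt (fun σ => √(Em σ u + δ^2))
      ((-2 * ∫ x, velS u σ x * Box u (hyp σ x)) / (2 * √(Em σ u + δ^2))) σ := fun σ hσ =>
    ((hasDerivAt_Em hu hsupp (by linarith)).add_const _).sqrt (hpos σ).ne'
  have hF : ContinuousOn (fun σ => L2f σ (Box u)) (Icc 2 s) :=
    ((coneTrace_box hu hsupp).sq.continuousOn_integral 2 s (by norm_num)).sqrt
  have key := intervalIntegral.sub_le_integral_of_hasDeriv_right_of_le hs
    (fun σ hσ => (hd σ hσ.1).continuousAt.continuousWithinAt)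
    (fun σ hσ => (hd σ hσ.1.le).hasDerivWithinAt) hF.integrableOn_Icc fun σ hσ => by
      rw [div_le_iff₀ (mul_pos two_pos (Real.sqrt_pos.2 (hpos σ)))]
      have h1 := deriv_Em_le hu hsupp (by linarith [hσ.1] : 0 < σ)
      have h2 : √(Em σ u) * L2f σ (Box u) ≤ √(Em σ u + δ^2) * L2f σ (Box u) :=
        mul_le_mul_of_nonneg_right (Real.sqrt_le_sqrt (by nlinarith)) (Real.sqrt_nonneg _)
      linarith
  have h1 : √(Em s u) ≤ √(Em s u + δ^2) := Real.sqrt_le_sqrt (by nlinarith)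
  have h2 : √(Em 2 u + δ^2) ≤ √(Em 2 u) + δ := by
    rw [Real.sqrt_le_left (by positivity), add_sq, Real.sq_sqrt (Em_nonneg 2 u)]
    have : 0 ≤ 2 * √(Em 2 u) * δ := by positivity
    linarith
  linarith
end
end

section
/- There is a universal constant C > 0 such that for every s ≥ 2 and every sufficiently smooth function u defined on the hyperboloid H_s (i.e., defined near H_s in K_{[2,∞)}) and spatially compactly supported in K: ‖ |x|⁻¹ u ‖_{L²_f(H_s)} ≤ C Σ_{a=1}^3 ‖ ∂̲_a u ‖_{L²_f(H_s)}, where ∂̲_a u = (x^a/t)∂_t u + ∂_a u. -/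
/-!
On `H_s`, parametrised by `x ∈ ℝ³`, put `v x = u (√(s² + |x|²), x)`. The chain rule gives
`∂_a v = ∂̲_a u` (`fderiv_restr`), and the support condition makes `v` compactly supported
(`hasCompactSupport_restr`), so the claim is the classical Hardy inequality on `ℝ³`
(`hardy_flat`) for `v`.

Hardy's inequality follows by integrating the divergence of the compactly supported `C¹` field
`v² x / (|x|² + ε)`, where `ε > 0` removes the singularity at the origin. Since
`div (x / (|x|² + ε)) ≥ 1 / (|x|² + ε)` in dimension three, completing a square and the
Cauchy-Schwarz inequality yield `∫ v² / (|x|² + ε) ≤ 4 ∫ |∇v|²` (`hardy_regularised`); then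
`ε → 0` by dominated convergence.
-/

noncomputable section

open MeasureTheory Real

/-! ### Restriction to the hyperboloid -/

/-- The function `x ↦ u (√(s² + |x|²), x)` on `ℝ³`: the restriction of `u` to the hyperboloid `H_s`
in the coordinates used by `L2f`. -/
def restr (s : ℝ) (u : (Fin 4 → ℝ) → ℝ) (x : Fin 3 → ℝ) : ℝ := u (hyp s x)

/-- The squared Euclidean length `|x|²`. -/
def nsq (x : Fin 3 → ℝ) : ℝ := ∑ a, (x a)^2

lemma nsq_nonneg (x : Fin 3 → ℝ) : 0 ≤ nsq x := Finset.sum_nonneg fun _ _ => sq_nonneg _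

lemma contDiff_nsq {n : WithTop ℕ∞} : ContDiff ℝ n nsq := by
  unfold nsq; fun_prop

lemma hasFDerivAt_nsq (x : Fin 3 → ℝ) :
    HasFDerivAt nsq
      (∑ a : Fin 3, (2 * x a) • ContinuousLinearMap.proj (R := ℝ) (φ := fun _ => ℝ) a) x := by
  unfold nsq
  refine HasFDerivAt.fun_sum fun a _ => ?_
  simpa using (hasFDerivAt_apply (𝕜 := ℝ) a x).pow 2

lemma fderiv_nsq_single (x : Fin 3 → ℝ) (a : Fin 3) :
    fderiv ℝ nsq x (Pi.single a 1) = 2 * x a := by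
  rw [(hasFDerivAt_nsq x).fderiv]
  simp [Pi.single_apply]

lemma contDiff_hyp {s : ℝ} (hs : 2 ≤ s) {n : WithTop ℕ∞} : ContDiff ℝ n (hyp s) := by
  rw [contDiff_pi]
  intro i
  refine Fin.cases ?_ (fun a => ?_) i
  · have : ContDiff ℝ n fun x : Fin 3 → ℝ => Real.sqrt (s^2 + nsq x) :=
      (contDiff_const.add contDiff_nsq).sqrt fun x => by have := nsq_nonneg x; positivity
    simpa [hyp, nsq] using this
  · simpa [hyp] using contDiff_apply ℝ ℝ a

/-- The semi-hyperboloidal derivative `∂̲_a u` is the coordinate derivative of the restriction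
of `u` to the hyperboloid. -/
lemma fderiv_restr {s : ℝ} (hs : 2 ≤ s) {u : (Fin 4 → ℝ) → ℝ} (hu : Differentiable ℝ u)
    (x : Fin 3 → ℝ) (a : Fin 3) :
    fderiv ℝ (restr s u) x (Pi.single a 1) = sdu a u (hyp s x) := by
  have hh : DifferentiableAt ℝ (hyp s) x := (contDiff_hyp hs (n := 1)).differentiable (by simp) x
  have hpos : 0 < s^2 + nsq x := by have := nsq_nonneg x; positivity
  have hv : fderiv ℝ (hyp s) x (Pi.single a 1)
      = (x a / hyp s x 0) • (Pi.single 0 1 : Fin 4 → ℝ) + Pi.single a.succ 1 := by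
    ext i
    have hi : fderiv ℝ (hyp s) x (Pi.single a 1) i
        = fderiv ℝ (fun y => hyp s y i) x (Pi.single a 1) := by
      rw [(hasFDerivAt_pi'.1 hh.hasFDerivAt i).fderiv]; rfl
    rw [hi]
    refine Fin.cases ?_ (fun b => ?_) i
    · have h1 : HasFDerivAt (fun y => hyp s y 0) _ x :=
        ((hasFDerivAt_nsq x).const_add (s^2)).sqrt hpos.ne'
      rw [h1.fderiv, ← (hasFDerivAt_nsq x).fderiv]
      simp only [smul_apply, fderiv_nsq_single]
      simp [hyp, nsq]
      ring
    · have h1 : HasFDerivAt (fun y => hyp s y b.succ) _ x := hasFDerivAt_apply (𝕜 := ℝ) b x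
      rw [h1.fderiv]
      simp [Pi.single_apply]
  have hc : fderiv ℝ (restr s u) x = (fderiv ℝ u (hyp s x)).comp (fderiv ℝ (hyp s) x) :=
    fderiv_comp x (hu _) hh
  rw [hc, ContinuousLinearMap.comp_apply, hv, map_add, map_smul]
  simp [sdu, pd, hyp]

/-- On `H_s` the condition `|x| ≤ t - 1` reads `2|x| + 1 ≤ s²`, so the restriction of `u` to `H_s`
has compact support. -/
lemma hasCompactSupport_restr {s : ℝ} {u : (Fin 4 → ℝ) → ℝ} (hK : SuppK u) :
    HasCompactSupport (restr s u) := by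
  refine HasCompactSupport.intro (isCompact_closedBall (0 : Fin 3 → ℝ) (s^2)) fun x hx => hK _ ?_
  have hq := nsq_nonneg x
  have hxr : s^2 < √(nsq x) := by
    rw [Metric.mem_closedBall, dist_zero_right, not_le] at hx
    refine hx.trans_le ((pi_norm_le_iff_of_nonneg (Real.sqrt_nonneg _)).2 fun a => ?_)
    refine Real.le_sqrt_of_sq_le ?_
    rw [Real.norm_eq_abs, sq_abs]
    exact Finset.single_le_sum (f := fun a => (x a)^2) (fun _ _ => sq_nonneg _) (Finset.mem_univ a)
  have h0 : hyp s x 0 = √(s^2 + nsq x) := rfl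
  have h1 : rad (sp (hyp s x)) = √(nsq x) := by simp [rad, sp, hyp, nsq]
  rw [h0, h1, sub_lt_iff_lt_add, Real.sqrt_lt' (by positivity)]
  nlinarith [Real.sq_sqrt hq, Real.sqrt_nonneg (nsq x)]

/-! ### Hardy's inequality on `ℝ³` -/

lemma integral_fderiv_eq_zero {g : (Fin 3 → ℝ) → ℝ} (hg : ContDiff ℝ 1 g)
    (hc : HasCompactSupport g) (e : Fin 3 → ℝ) :
    Integrable (fun x => fderiv ℝ g x e) ∧ ∫ x, fderiv ℝ g x e = 0 := by
  have hi : Integrable (fun x => fderiv ℝ g x e) :=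
    ((hg.continuous_fderiv (by simp)).clm_apply continuous_const).integrable_of_hasCompactSupport
      (hc.fderiv_apply (𝕜 := ℝ) e)
  refine ⟨hi, ?_⟩
  have := integral_mul_fderiv_eq_neg_fderiv_mul_of_integrable (μ := volume)
    (f := fun _ : Fin 3 → ℝ => (1 : ℝ)) (g := g) (v := e)
    (by simp) (by simpa using hi)
    (by simpa using hg.continuous.integrable_of_hasCompactSupport hc)
    (by fun_prop) (fun x _ => hg.differentiable (by simp) x)
  simpa using this

/-- The pointwise form of the regularised inequality: `y` stands for `v`, `d` for `∇v`, `w` for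
`|x|² + ε`, and the bracket for the divergence of `v² x / w`. The difference of the two sides is a
sum of a square, a Cauchy-Schwarz defect and a nonnegative term of order `ε`. -/
lemma regularised_pointwise {ε w y d0 d1 d2 x0 x1 x2 : ℝ} (hε : 0 < ε) (hw : 0 < w)
    (hwe : w = x0 ^ 2 + x1 ^ 2 + x2 ^ 2 + ε) :
    y ^ 2 / w ≤ 2 * (2 * y * d0 * (x0 / w) + y ^ 2 * (1 / w - 2 * x0 ^ 2 / w ^ 2)
          + (2 * y * d1 * (x1 / w) + y ^ 2 * (1 / w - 2 * x1 ^ 2 / w ^ 2))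
          + (2 * y * d2 * (x2 / w) + y ^ 2 * (1 / w - 2 * x2 ^ 2 / w ^ 2)))
        + 4 * (d0 ^ 2 + d1 ^ 2 + d2 ^ 2) := by
  -- Cauchy-Schwarz for `x · ∇v`
  have hcs : (x0 * d0 + x1 * d1 + x2 * d2) ^ 2 ≤ w * (d0 ^ 2 + d1 ^ 2 + d2 ^ 2) := by
    have : w = x0 ^ 2 + x1 ^ 2 + x2 ^ 2 + ε := by linarith
    rw [this]
    nlinarith [sq_nonneg (x0 * d1 - x1 * d0), sq_nonneg (x0 * d2 - x2 * d0),
      sq_nonneg (x1 * d2 - x2 * d1), mul_nonneg hε.le (sq_nonneg d0),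
      mul_nonneg hε.le (sq_nonneg d1), mul_nonneg hε.le (sq_nonneg d2)]
  have e : 2 * (2 * y * d0 * (x0 / w) + y ^ 2 * (1 / w - 2 * x0 ^ 2 / w ^ 2)
        + (2 * y * d1 * (x1 / w) + y ^ 2 * (1 / w - 2 * x1 ^ 2 / w ^ 2))
        + (2 * y * d2 * (x2 / w) + y ^ 2 * (1 / w - 2 * x2 ^ 2 / w ^ 2)))
      + 4 * (d0 ^ 2 + d1 ^ 2 + d2 ^ 2) - y ^ 2 / w
      = (y + 2 * (x0 * d0 + x1 * d1 + x2 * d2)) ^ 2 / w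
        + 4 * (w * (d0 ^ 2 + d1 ^ 2 + d2 ^ 2) - (x0 * d0 + x1 * d1 + x2 * d2) ^ 2) / w
        + 4 * y ^ 2 * ε / w ^ 2 := by
    have : ε = w - (x0 ^ 2 + x1 ^ 2 + x2 ^ 2) := by linarith
    rw [this]
    field_simp
    ring
  have h1 : 0 ≤ (w * (d0 ^ 2 + d1 ^ 2 + d2 ^ 2) - (x0 * d0 + x1 * d1 + x2 * d2) ^ 2) := by
    linarith
  have : 0 ≤ (y + 2 * (x0 * d0 + x1 * d1 + x2 * d2)) ^ 2 / w
        + 4 * (w * (d0 ^ 2 + d1 ^ 2 + d2 ^ 2) - (x0 * d0 + x1 * d1 + x2 * d2) ^ 2) / w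
        + 4 * y ^ 2 * ε / w ^ 2 := by positivity
  linarith

lemma fderiv_field {v : (Fin 3 → ℝ) → ℝ} {x : Fin 3 → ℝ} (hv : DifferentiableAt ℝ v x) {ε : ℝ}
    (hw : 0 < nsq x + ε) (a : Fin 3) :
    fderiv ℝ (fun z => v z ^ 2 * (z a / (nsq z + ε))) x (Pi.single a 1)
      = 2 * v x * fderiv ℝ v x (Pi.single a 1) * (x a / (nsq x + ε))
        + v x ^ 2 * (1 / (nsq x + ε) - 2 * x a ^ 2 / (nsq x + ε) ^ 2) := by
  have hvx := hv.hasFDerivAt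
  have h1 := (hvx.pow 2).mul ((hasFDerivAt_apply (𝕜 := ℝ) a x).mul
    (((hasDerivAt_inv hw.ne').comp_hasFDerivAt x ((hasFDerivAt_nsq x).add_const ε))))
  have h2 : HasFDerivAt (fun z => v z ^ 2 * (z a / (nsq z + ε))) _ x := h1
  rw [h2.fderiv, ← (hasFDerivAt_nsq x).fderiv]
  simp [fderiv_nsq_single]
  have := hw.ne'
  field_simp
  ring

/-- The Hardy inequality with the weight `|x|⁻²` regularised to `(|x|² + ε)⁻¹`. It comes from
integrating the divergence of `v² x / (|x|² + ε)`, which vanishes. -/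
lemma hardy_regularised {v : (Fin 3 → ℝ) → ℝ} (hv : ContDiff ℝ 1 v) (hc : HasCompactSupport v)
    {ε : ℝ} (hε : 0 < ε) :
    Integrable (fun x => v x ^ 2 / (nsq x + ε)) ∧
    ∫ x, v x ^ 2 / (nsq x + ε)
      ≤ 4 * ∑ a : Fin 3, ∫ x, (fderiv ℝ v x (Pi.single a 1)) ^ 2 := by
  have hw (x) : 0 < nsq x + ε := by have := nsq_nonneg x; positivity
  have hwc : ContDiff ℝ 1 fun x => nsq x + ε := contDiff_nsq.add contDiff_const
  obtain ⟨g, hgdef⟩ : ∃ g : Fin 3 → (Fin 3 → ℝ) → ℝ,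
      ∀ a, g a = fun x => v x ^ 2 * (x a / (nsq x + ε)) := ⟨_, fun _ => rfl⟩
  have hgd (a) : ContDiff ℝ 1 (g a) := by
    rw [hgdef]
    exact (hv.pow 2).mul ((contDiff_apply ℝ ℝ a).div hwc fun x => (hw x).ne')
  have hc2 : HasCompactSupport fun x => v x ^ 2 :=
    hc.comp_left (g := fun y : ℝ => y ^ 2) (by simp)
  have hgc (a) : HasCompactSupport (g a) := by
    rw [hgdef]
    exact hc2.mul_right
  have hg (a) := integral_fderiv_eq_zero (hgd a) (hgc a) (Pi.single a 1)
  have hD (a : Fin 3) : Integrable fun x => (fderiv ℝ v x (Pi.single a 1)) ^ 2 := by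
    have h1 : Continuous fun x => fderiv ℝ v x (Pi.single a 1) :=
      (hv.continuous_fderiv (by simp)).clm_apply continuous_const
    have h2 : HasCompactSupport fun x => fderiv ℝ v x (Pi.single a 1) :=
      hc.fderiv_apply (𝕜 := ℝ) (Pi.single a 1)
    have h3 : HasCompactSupport fun x => (fderiv ℝ v x (Pi.single a 1)) ^ 2 :=
      h2.comp_left (g := fun y : ℝ => y ^ 2) (by simp)
    exact (h1.pow 2).integrable_of_hasCompactSupport h3
  have hI : Integrable fun x => v x ^ 2 / (nsq x + ε) := by
    refine Continuous.integrable_of_hasCompactSupport ?_ ?_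
    · exact (hv.continuous.pow 2).div hwc.continuous fun x => (hw x).ne'
    · simp only [div_eq_mul_inv]
      exact hc2.mul_right
  have hgx (a x) : fderiv ℝ (g a) x (Pi.single a 1)
      = 2 * v x * fderiv ℝ v x (Pi.single a 1) * (x a / (nsq x + ε))
        + v x ^ 2 * (1 / (nsq x + ε) - 2 * x a ^ 2 / (nsq x + ε) ^ 2) := by
    rw [hgdef]
    exact fderiv_field (hv.differentiable (by simp) x) (hw x) a
  refine ⟨hI, ?_⟩
  have key (x) : v x ^ 2 / (nsq x + ε) ≤ 2 * (∑ a, fderiv ℝ (g a) x (Pi.single a 1))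
      + 4 * ∑ a : Fin 3, (fderiv ℝ v x (Pi.single a 1)) ^ 2 := by
    simp only [hgx]
    have hwx := hw x
    have hq : nsq x = x 0 ^ 2 + x 1 ^ 2 + x 2 ^ 2 := by simp [nsq, Fin.sum_univ_three]
    simp only [Fin.sum_univ_three]
    exact regularised_pointwise hε hwx (by linarith)
  have hS1 : Integrable fun x => ∑ a, fderiv ℝ (g a) x (Pi.single a 1) :=
    integrable_finsetSum _ fun a _ => (hg a).1
  have hS2 : Integrable fun x => ∑ a : Fin 3, (fderiv ℝ v x (Pi.single a 1)) ^ 2 :=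
    integrable_finsetSum _ fun a _ => hD a
  have e1 : ∫ x, ∑ a, fderiv ℝ (g a) x (Pi.single a 1) = 0 := by
    rw [integral_finsetSum _ fun a _ => (hg a).1]
    exact Finset.sum_eq_zero fun a _ => (hg a).2
  have e2 : ∫ x, ∑ a : Fin 3, (fderiv ℝ v x (Pi.single a 1)) ^ 2
      = ∑ a : Fin 3, ∫ x, (fderiv ℝ v x (Pi.single a 1)) ^ 2 :=
    integral_finsetSum _ fun a _ => hD a
  have hS := integral_mono hI ((hS1.const_mul 2).add (hS2.const_mul 4)) key
  rwa [integral_add' (hS1.const_mul 2) (hS2.const_mul 4), integral_const_mul, integral_const_mul,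
    e1, e2, mul_zero, zero_add] at hS

/-- Hardy's inequality on `ℝ³` with constant `4`. If the left integrand were not integrable, its
integral would be `0` by convention and the bound trivial; otherwise the integrand itself dominates
the regularised ones. -/
lemma hardy_flat {v : (Fin 3 → ℝ) → ℝ} (hv : ContDiff ℝ 1 v) (hc : HasCompactSupport v) :
    ∫ x, (v x / √(nsq x)) ^ 2 ≤ 4 * ∑ a : Fin 3, ∫ x, (fderiv ℝ v x (Pi.single a 1)) ^ 2 := by
  by_cases hI : Integrable fun x => (v x / √(nsq x)) ^ 2
  swap
  · rw [integral_undef hI]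
    exact mul_nonneg (by norm_num)
      (Finset.sum_nonneg fun a _ => integral_nonneg fun x => sq_nonneg _)
  have hε (n : ℕ) : (0 : ℝ) < 1 / ((n : ℝ) + 1) := by positivity
  -- The factor `|x|² / (|x|² + ε)` removes the origin, where the weight takes the junk value `0`.
  let F (n : ℕ) (x : Fin 3 → ℝ) : ℝ :=
    (v x / √(nsq x)) ^ 2 * (nsq x / (nsq x + 1 / ((n : ℝ) + 1)))
  have hfac (n : ℕ) (x) : 0 ≤ nsq x / (nsq x + 1 / ((n : ℝ) + 1)) ∧
      nsq x / (nsq x + 1 / ((n : ℝ) + 1)) ≤ 1 := by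
    have := nsq_nonneg x
    have := hε n
    exact ⟨by positivity, div_le_one_of_le₀ (by linarith) (by positivity)⟩
  have hm (n : ℕ) : AEStronglyMeasurable (F n) volume := by
    refine hI.aestronglyMeasurable.mul (Measurable.aestronglyMeasurable ?_)
    have : Measurable nsq := (contDiff_nsq (n := 0)).continuous.measurable
    fun_prop
  have hle (n : ℕ) (x) : ‖F n x‖ ≤ (v x / √(nsq x)) ^ 2 := by
    have h := hfac n x
    rw [Real.norm_of_nonneg (mul_nonneg (sq_nonneg _) h.1)]
    exact mul_le_of_le_one_right (sq_nonneg _) h.2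
  have hlim : Filter.Tendsto (fun n => ∫ x, F n x) Filter.atTop
      (nhds (∫ x, (v x / √(nsq x)) ^ 2)) := by
    refine tendsto_integral_of_dominated_convergence _ hm hI (fun n => .of_forall (hle n))
      (.of_forall fun x => ?_)
    rcases (nsq_nonneg x).eq_or_lt with h0 | h0
    · simp [F, ← h0]
    · have h1 : Filter.Tendsto (fun n : ℕ => nsq x / (nsq x + 1 / ((n : ℝ) + 1))) Filter.atTop
          (nhds (nsq x / (nsq x + 0))) :=
        tendsto_const_nhds.div (tendsto_const_nhds.add tendsto_one_div_add_atTop_nhds_zero_nat)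
          (by simpa using h0.ne')
      rw [add_zero, div_self h0.ne'] at h1
      simpa [F] using h1.const_mul ((v x / √(nsq x)) ^ 2)
  refine le_of_tendsto' hlim fun n => ?_
  obtain ⟨h1, h2⟩ := hardy_regularised hv hc (hε n)
  refine (integral_mono (hI.mono' (hm n) (.of_forall (hle n))) h1 fun x => ?_).trans h2
  have hn := hε n
  rcases (nsq_nonneg x).eq_or_lt with h0 | h0
  · simp only [F, ← h0]
    simp
    positivity
  · simp only [F]
    rw [div_pow, Real.sq_sqrt h0.le]
    apply le_of_eq
    field_simp

/-- Lemma 2.4, Hardy inequality on hyperboloids: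
`‖|x|⁻¹ u‖_{L²_f(H_s)} ≲ Σ_a ‖∂̲_a u‖_{L²_f(H_s)}`. -/
theorem hardy_inequality_on_hyperboloids :
    ∃ C : ℝ, 0 < C ∧
      ∀ s : ℝ, 2 ≤ s →
        ∀ u : (Fin 4 → ℝ) → ℝ, ContDiff ℝ (⊤ : ℕ∞) u → SuppK u →
          L2f s (fun p => u p / rad (sp p)) ≤ C * ∑ a : Fin 3, L2f s (sdu a u) := by
  refine ⟨2, two_pos, fun s hs u hu hK => ?_⟩
  have hv : ContDiff ℝ 1 (restr s u) := (hu.of_le (by exact_mod_cast le_top)).comp (contDiff_hyp hs)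
  have H := hardy_flat hv (hasCompactSupport_restr hK)
  simp only [fderiv_restr hs (hu.differentiable (by simp))] at H
  have hnn (a : Fin 3) : 0 ≤ L2f s (sdu a u) := Real.sqrt_nonneg _
  have hsq (a : Fin 3) : ∫ x : Fin 3 → ℝ, (sdu a u (hyp s x)) ^ 2 = L2f s (sdu a u) ^ 2 :=
    (Real.sq_sqrt (integral_nonneg fun x => sq_nonneg _)).symm
  simp only [hsq] at H
  refine Real.sqrt_le_iff.2 ⟨mul_nonneg two_pos.le (Finset.sum_nonneg fun a _ => hnn a), ?_⟩
  have hr (x : Fin 3 → ℝ) : rad (sp (hyp s x)) = √(nsq x) := by simp [rad, sp, hyp, nsq]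
  simp only [hr]
  refine H.trans ?_
  rw [mul_pow]
  have := Finset.sum_sq_le_sq_sum_of_nonneg (s := Finset.univ) fun (a : Fin 3) _ => hnn a
  linarith
end
end

section
/- Fix t ≥ 2, x ∈ ℝ³ with 0 < r = |x| < t-1, and μ ∈ (0,1/2]. For λ ∈ (0,1], let I(λ) = ∫_{S_λ} (λ - |x/t - y|)^{-(1-μ)} dσ(y), where S_λ = {y ∈ ℝ³ : |y| = 1-λ and |x/t - y| ≤ λ - t⁻¹} and dσ is the surface measure on the sphere {|y| = 1-λ}. Then there is a universal constant C such that: (i) for (t-r+1)/(2t) ≤ λ ≤ (t+r+1)/(2t), I(λ) ≤ C (λ t (1-λ)/(μ r)) ((t-r)/t)^μ; (ii) if (t+r+1)/(2t) ≤ (t-r)/t, then for (t+r+1)/(2t) ≤ λ ≤ (t-r)/t, I(λ) ≤ C (1-λ) ((t+r)/t − λ) (2λ − (t+r)/t)^{-1+μ}; (iii) for max((t-r)/t, (t+r+1)/(2t)) ≤ λ ≤ 1, I(λ) ≤ C ((1-λ) t/(μ r)) ((t-r)/t)^μ. Moreover I(λ) = 0 when 0 < λ ≤ (t-r+1)/(2t).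 -/
/-!
Write `s = 1 - λ`, `a = |x|/t`, and let `ρ = |x/t - y|` be the distance from `x/t` to a point `y`
of the sphere `|y| = s`. The integrand depends on `ρ` only, and classically the push-forward of
surface measure under `ρ` is `2π (s/a) ρ dρ` on `[|a - s|, a + s]`. Hence, up to a constant,
`I(λ)` is `(s/a) ∫ ρ (λ - ρ)^(μ-1) dρ` over `|a - s| ≤ ρ ≤ min (a + s) (λ - 1/t)`.

Only an upper bound for the push-forward is needed (`sphere_le_dist`). It comes from the
Lambert azimuthal equal-area parametrization of a hemisphere by a disk: this map is Lipschitz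
(`lipschitz_lambert`), so Hausdorff measure on the hemisphere is at most a constant times Lebesgue
measure on the disk (`hemisphere_le_disk`), and being equal-area it makes heights over the disk
uniformly distributed (`disk_le_height`). The height is then exchanged for `ρ` (`height_le_dist`).

The one-dimensional integral is treated in two ways. Integrating the singularity up to `ρ = λ`
gives `λ (λ - |a - s|)^μ / μ` (`radial_le`), and `λ - |a - s| ≤ 1 - a` gives the first and third
estimates. When `(1 + a + 1/t)/2 ≤ λ ≤ 1 - a` the range of `ρ` has length `2a` and the weight is at
most its value at `ρ = a + s` (`radial_le_const`), which is the second estimate. When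
`λ ≤ (1 - a + 1/t)/2` the range of `ρ` has at most one point, so the integral vanishes.
-/

noncomputable section
open MeasureTheory

/-- The surface integral `I(λ) = ∫_{S_λ} (λ - |x/t - y|)^{-(1-μ)} dσ(y)` over the portion
`S_λ` of the sphere `{|y| = 1-λ}` lying in the ball `{|x/t - y| ≤ λ - t⁻¹}`, with respect
to the 2-dimensional Hausdorff (surface) measure. -/
def sphereInt (t : ℝ) (x : EuclideanSpace ℝ (Fin 3)) (μ lam : ℝ) : ℝ :=
  ∫ y in {y : EuclideanSpace ℝ (Fin 3) | ‖y‖ = 1 - lam ∧ ‖t⁻¹ • x - y‖ ≤ lam - t⁻¹},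
    (lam - ‖t⁻¹ • x - y‖) ^ (-(1 - μ)) ∂ (Measure.hausdorffMeasure 2)

/-! ### The Lambert parametrization of a hemisphere -/

/-- Euclidean three-space. -/
abbrev E3 := EuclideanSpace ℝ (Fin 3)

/-- Height of the Lambert azimuthal equal-area parametrization of the sphere of radius `s`. -/
def lambertHeight (s : ℝ) (w : ℝ × ℝ) : ℝ := s - (w.1 ^ 2 + w.2 ^ 2) / (2 * s)

/-- Horizontal contraction factor of the Lambert azimuthal equal-area parametrization. -/
def lambertScale (s : ℝ) (w : ℝ × ℝ) : ℝ :=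
  Real.sqrt (1 - (w.1 ^ 2 + w.2 ^ 2) / (4 * s ^ 2))

/-- The Lambert azimuthal equal-area parametrization, in the orthonormal basis `b`, of the sphere
of radius `s` about the pole `s • b 2`. -/
def lambert (b : OrthonormalBasis (Fin 3) ℝ E3) (s : ℝ) (w : ℝ × ℝ) : E3 :=
  (lambertScale s w * w.1) • b 0 + (lambertScale s w * w.2) • b 1 + lambertHeight s w • b 2

/-- The disk which `lambert` maps onto the closed upper hemisphere. -/
def lambertDisk (s : ℝ) : Set (ℝ × ℝ) := {w | w.1 ^ 2 + w.2 ^ 2 ≤ 2 * s ^ 2}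

lemma measurable_lambertHeight (s : ℝ) : Measurable (lambertHeight s) := by
  unfold lambertHeight; fun_prop

lemma measurableSet_lambertDisk (s : ℝ) : MeasurableSet (lambertDisk s) :=
  measurableSet_le (by fun_prop) measurable_const

lemma inner_lambert (b : OrthonormalBasis (Fin 3) ℝ E3) (s : ℝ) (w : ℝ × ℝ) :
    inner ℝ (b 2) (lambert b s w) = lambertHeight s w := by
  simp [lambert, inner_add_right, inner_smul_right, b.inner_eq_ite]

/-- The Lambert map has no distortion blow-up on the disk over the hemisphere, because the scale
factor stays in `[1/√2, 1]` there. -/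
lemma lipschitz_lambert (b : OrthonormalBasis (Fin 3) ℝ E3) {s : ℝ} (hs : 0 < s) :
    LipschitzOnWith 14 (lambert b s) (lambertDisk s) := by
  refine LipschitzOnWith.of_dist_le_mul ?_
  rintro ⟨u, v⟩ hw ⟨u', v'⟩ hw'
  simp only [lambertDisk, Set.mem_ofPred_eq] at hw hw'
  set d := dist (u, v) (u', v') with hd
  have hd0 : 0 ≤ d := dist_nonneg
  have hu : |u - u'| ≤ d := by
    rw [hd, Prod.dist_eq, ← Real.dist_eq]; exact le_max_left _ _
  have hv : |v - v'| ≤ d := by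
    rw [hd, Prod.dist_eq, ← Real.dist_eq]; exact le_max_right _ _
  have bd : ∀ p q : ℝ, p ^ 2 + q ^ 2 ≤ 2 * s ^ 2 → |p| ≤ 2 * s ∧ |q| ≤ 2 * s := fun p q h =>
    ⟨abs_le_of_sq_le_sq (by nlinarith [sq_nonneg q]) (by positivity),
     abs_le_of_sq_le_sq (by nlinarith [sq_nonneg p]) (by positivity)⟩
  obtain ⟨h1, h2⟩ := bd _ _ hw
  obtain ⟨h3, h4⟩ := bd _ _ hw'
  have diffsq : ∀ p p' : ℝ, |p| ≤ 2 * s → |p'| ≤ 2 * s → |p - p'| ≤ d →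
      |p ^ 2 - p' ^ 2| ≤ 4 * s * d := by
    intro p p' hp hp' h
    rw [show p ^ 2 - p' ^ 2 = (p + p') * (p - p') by ring, abs_mul]
    exact mul_le_mul ((abs_add_le _ _).trans (by linarith)) h (abs_nonneg _) (by positivity)
  have hq : |(u ^ 2 + v ^ 2) - (u' ^ 2 + v' ^ 2)| ≤ 8 * s * d := by
    rw [show (u ^ 2 + v ^ 2) - (u' ^ 2 + v' ^ 2) = (u ^ 2 - u' ^ 2) + (v ^ 2 - v' ^ 2) by ring]
    refine (abs_add_le _ _).trans ?_
    linarith [diffsq u u' h1 h3 hu, diffsq v v' h2 h4 hv]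
  have hz : |lambertHeight s (u, v) - lambertHeight s (u', v')| ≤ 4 * d := by
    have : lambertHeight s (u, v) - lambertHeight s (u', v')
        = -(((u ^ 2 + v ^ 2) - (u' ^ 2 + v' ^ 2)) / (2 * s)) := by
      simp only [lambertHeight]; ring
    rw [this, abs_neg, abs_div, abs_of_pos (by positivity : 0 < 2 * s),
      div_le_iff₀ (by positivity)]
    linarith
  have kprop : ∀ p q : ℝ, p ^ 2 + q ^ 2 ≤ 2 * s ^ 2 →
      1 / 2 ≤ lambertScale s (p, q) ∧ lambertScale s (p, q) ≤ 1 ∧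
      lambertScale s (p, q) ^ 2 = 1 - (p ^ 2 + q ^ 2) / (4 * s ^ 2) := by
    intro p q h
    have e : (p ^ 2 + q ^ 2) / (4 * s ^ 2) ≤ 1 / 2 := by
      rw [div_le_iff₀ (by positivity)]; linarith
    have e' : 0 ≤ (p ^ 2 + q ^ 2) / (4 * s ^ 2) := by positivity
    refine ⟨Real.le_sqrt_of_sq_le ?_, Real.sqrt_le_one.2 ?_, Real.sq_sqrt ?_⟩ <;>
      simp only <;> linarith
  obtain ⟨k1, k2, k3⟩ := kprop _ _ hw
  obtain ⟨k1', k2', k3'⟩ := kprop _ _ hw'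
  set k := lambertScale s (u, v)
  set k' := lambertScale s (u', v')
  have hk : |k - k'| * s ≤ 2 * d := by
    have e1 : |k - k'| * (k + k') = |(u ^ 2 + v ^ 2) - (u' ^ 2 + v' ^ 2)| / (4 * s ^ 2) := by
      rw [← abs_of_pos (by linarith : 0 < k + k'), ← abs_mul, ← abs_neg,
        ← abs_of_pos (by positivity : 0 < 4 * s ^ 2), ← abs_div]
      congr 1
      rw [sub_div]
      linarith
    have e2 : |k - k'| ≤ 8 * s * d / (4 * s ^ 2) := by
      refine le_trans ?_ (e1.le.trans (by gcongr))
      exact le_mul_of_one_le_right (abs_nonneg _) (by linarith)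
    calc |k - k'| * s ≤ 8 * s * d / (4 * s ^ 2) * s := by gcongr
      _ = 2 * d := by field_simp; ring
  have comp : ∀ p p' : ℝ, |p'| ≤ 2 * s → |p - p'| ≤ d → |k * p - k' * p'| ≤ 5 * d := by
    intro p p' hp' h
    rw [show k * p - k' * p' = k * (p - p') + (k - k') * p' by ring]
    refine (abs_add_le _ _).trans ?_
    rw [abs_mul, abs_mul, abs_of_nonneg (by linarith : 0 ≤ k)]
    have : k * |p - p'| ≤ 1 * d := mul_le_mul k2 h (abs_nonneg _) (by norm_num)
    have : |k - k'| * |p'| ≤ |k - k'| * (2 * s) := by gcongr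
    linarith
  have hb : ∀ i, ‖b i‖ = 1 := b.orthonormal.1
  rw [dist_eq_norm]
  have : lambert b s (u, v) - lambert b s (u', v') = (k * u - k' * u') • b 0
      + (k * v - k' * v') • b 1
      + (lambertHeight s (u, v) - lambertHeight s (u', v')) • b 2 := by
    simp only [lambert, sub_smul]; abel
  rw [this]
  refine (norm_add₃_le).trans ?_
  simp only [norm_smul, hb, mul_one, Real.norm_eq_abs, NNReal.coe_ofNat]
  linarith [comp u u' h3 hu, comp v v' h4 hv]

lemma exists_lambert_eq (b : OrthonormalBasis (Fin 3) ℝ E3) {s : ℝ} (hs : 0 < s) {y : E3}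
    (hy : ‖y‖ = s) (hy0 : 0 ≤ inner ℝ (b 2) y) : ∃ w ∈ lambertDisk s, lambert b s w = y := by
  have hsum : ∑ i, inner ℝ (b i) y • b i = y := b.sum_repr' y
  have hsq := b.sum_sq_norm_inner_right y
  simp only [Fin.sum_univ_three, Real.norm_eq_abs, sq_abs, hy] at hsum hsq
  set p := inner ℝ (b 0) y
  set q := inner ℝ (b 1) y
  set z := inner ℝ (b 2) y
  have hzs : z ≤ s := abs_le_of_sq_le_sq' (by nlinarith) hs.le |>.2
  have hc : 0 < (s + z) / (2 * s) := by positivity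
  set k := Real.sqrt ((s + z) / (2 * s)) with hk
  have hk0 : 0 < k := Real.sqrt_pos.2 hc
  have hk2 : k ^ 2 = (s + z) / (2 * s) := Real.sq_sqrt hc.le
  have hq : (p / k) ^ 2 + (q / k) ^ 2 = 2 * s * (s - z) := by
    rw [div_pow, div_pow, hk2]
    have : s + z ≠ 0 := by positivity
    field_simp
    nlinarith
  have hh : lambertHeight s (p / k, q / k) = z := by
    simp only [lambertHeight, hq]; field_simp; ring
  have hsc : lambertScale s (p / k, q / k) = k := by
    simp only [lambertScale]
    rw [hq, hk]
    congr 1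
    field_simp
    ring
  refine ⟨(p / k, q / k), ?_, ?_⟩
  · simp only [lambertDisk, Set.mem_ofPred_eq, hq]; nlinarith
  · simp only [lambert, hh, hsc]
    rw [mul_div_cancel₀ _ hk0.ne', mul_div_cancel₀ _ hk0.ne']
    exact hsum

/-- Integrals of zonal functions over a hemisphere are controlled by integrals over the Lambert
disk: Hausdorff measure grows by at most the square of the Lipschitz constant. -/
lemma hemisphere_le_disk (b : OrthonormalBasis (Fin 3) ℝ E3) {s : ℝ} (hs : 0 < s)
    {g : ℝ → ENNReal} (hg : Measurable g) :
    ∫⁻ y in {y : E3 | ‖y‖ = s ∧ 0 ≤ inner ℝ (b 2) y}, g (inner ℝ (b 2) y)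
        ∂(Measure.hausdorffMeasure 2)
      ≤ 196 * ∫⁻ w in lambertDisk s, g (lambertHeight s w) := by
  set H : Set E3 := {y : E3 | ‖y‖ = s ∧ 0 ≤ inner ℝ (b 2) y}
  have hin : Measurable (fun y : E3 => inner ℝ (b 2) y) := by fun_prop
  have hle : ((Measure.hausdorffMeasure 2).restrict H).map (fun y : E3 => inner ℝ (b 2) y)
      ≤ (196 : ENNReal) • ((volume.restrict (lambertDisk s)).map (lambertHeight s)) := by
    refine Measure.le_iff.2 fun A hA => ?_
    rw [Measure.map_apply hin hA, Measure.smul_apply,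
      Measure.map_apply (measurable_lambertHeight s) hA, Measure.restrict_apply (hin hA),
      Measure.restrict_apply (measurable_lambertHeight s hA)]
    have hsub : (fun y : E3 => inner ℝ (b 2) y) ⁻¹' A ∩ H
        ⊆ lambert b s '' (lambertHeight s ⁻¹' A ∩ lambertDisk s) := by
      rintro y ⟨hyA, hy, hy0⟩
      obtain ⟨w, hw, rfl⟩ := exists_lambert_eq b hs hy hy0
      refine ⟨w, ⟨?_, hw⟩, rfl⟩
      simpa only [Set.mem_preimage, inner_lambert] using hyA
    refine (measure_mono hsub).trans ?_
    have := ((lipschitz_lambert b hs).mono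
      (Set.inter_subset_right (s := lambertHeight s ⁻¹' A))).hausdorffMeasure_image_le
        (d := 2) (by norm_num)
    refine this.trans_eq ?_
    rw [hausdorffMeasure_prod_real, smul_eq_mul]
    norm_num
  calc _ = ∫⁻ h, g h ∂(((Measure.hausdorffMeasure 2).restrict H).map
        (fun y : E3 => inner ℝ (b 2) y)) := (lintegral_map hg hin).symm
    _ ≤ ∫⁻ h, g h ∂((196 : ENNReal) •
        ((volume.restrict (lambertDisk s)).map (lambertHeight s))) := lintegral_mono' hle le_rfl
    _ = _ := by rw [lintegral_smul_measure, lintegral_map hg (measurable_lambertHeight s),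
      smul_eq_mul]

/-! ### Distribution of the height and of the distance to a point -/

/-- The Lambert map preserves area, so heights over the disk are uniformly distributed
(Archimedes' hat-box theorem). -/
lemma disk_le_height {s : ℝ} (hs : 0 < s) {g : ℝ → ENNReal} (hg : Measurable g) :
    ∫⁻ w in lambertDisk s, g (lambertHeight s w)
      ≤ ENNReal.ofReal (2 * Real.pi * s) * ∫⁻ h in Set.Icc 0 s, g h := by
  set T : Set ℝ := {r | r ^ 2 ≤ 2 * s ^ 2}
  have hT : MeasurableSet T := measurableSet_le (by fun_prop) measurable_const
  set f : ℝ → ℝ := fun r => s - r ^ 2 / (2 * s)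
  have hf : Measurable f := by fun_prop
  set G : ℝ → ENNReal := T.indicator (fun r => g (f r))
  have hG : Measurable G := (hg.comp hf).indicator hT
  have hpt : ∀ p : ℝ × ℝ, ENNReal.ofReal p.1 •
      (lambertDisk s).indicator (fun w => g (lambertHeight s w)) (polarCoord.symm p)
        = (ENNReal.ofReal p.1 * G p.1) * (fun _ : ℝ => (1 : ENNReal)) p.2 := by
    intro p
    have e : (p.1 * Real.cos p.2) ^ 2 + (p.1 * Real.sin p.2) ^ 2 = p.1 ^ 2 := by
      rw [mul_pow, mul_pow, ← mul_add, Real.cos_sq_add_sin_sq, mul_one]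
    simp only [polarCoord_symm_apply, G, T, f, Set.indicator, lambertDisk, Set.mem_ofPred_eq,
      lambertHeight, e, smul_eq_mul, mul_one]
  have hinj : Set.InjOn f (Set.Ioi 0 ∩ T) := by
    rintro r ⟨hr, -⟩ r' ⟨hr', -⟩ h
    simp only [Set.mem_Ioi] at hr hr'
    have : r ^ 2 = r' ^ 2 := by
      have h' : r ^ 2 / (2 * s) = r' ^ 2 / (2 * s) := by simp only [f] at h; linarith
      field_simp at h'; exact h'
    exact (sq_eq_sq₀ hr.le hr'.le).1 this
  have hder : ∀ r ∈ Set.Ioi 0 ∩ T, HasDerivWithinAt f (-(r / s)) (Set.Ioi 0 ∩ T) r := by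
    intro r _
    have := ((hasDerivAt_pow 2 r).div_const (2 * s)).const_sub s
    refine (this.congr_deriv ?_).hasDerivWithinAt
    field_simp; simp
  have hmeas : MeasurableSet (Set.Ioi 0 ∩ T) := measurableSet_Ioi.inter hT
  have hcov := lintegral_image_eq_lintegral_abs_deriv_mul hmeas hder hinj g
  have himg : f '' (Set.Ioi 0 ∩ T) ⊆ Set.Icc 0 s := by
    rintro _ ⟨r, ⟨-, hr⟩, rfl⟩
    have hr : r ^ 2 ≤ 2 * s ^ 2 := hr
    have h1 : r ^ 2 / (2 * s) ≤ s := by rw [div_le_iff₀ (by positivity)]; linarith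
    have h2 : 0 ≤ r ^ 2 / (2 * s) := by positivity
    constructor <;> simp only [f] <;> linarith
  calc ∫⁻ w in lambertDisk s, g (lambertHeight s w)
      = ∫⁻ w, (lambertDisk s).indicator (fun w => g (lambertHeight s w)) w :=
        (lintegral_indicator (measurableSet_lambertDisk s) _).symm
    _ = ∫⁻ p in polarCoord.target,
          (ENNReal.ofReal p.1 * G p.1) * (fun _ : ℝ => (1 : ENNReal)) p.2 := by
        rw [← lintegral_comp_polarCoord_symm]; simp only [hpt]
    _ = (∫⁻ r in Set.Ioi 0, ENNReal.ofReal r * G r) * ENNReal.ofReal (2 * Real.pi) := by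
        rw [polarCoord_target, Measure.volume_eq_prod, ← Measure.prod_restrict,
          lintegral_prod_mul (f := fun r => ENNReal.ofReal r * G r) (g := fun _ : ℝ => 1)
            (by fun_prop) (by fun_prop)]
        simp only [lintegral_one, Measure.restrict_apply_univ, Real.volume_Ioo]
        congr 2; ring
    _ = (∫⁻ r in Set.Ioi 0 ∩ T, ENNReal.ofReal r * g (f r)) * ENNReal.ofReal (2 * Real.pi) := by
        congr 1
        rw [Set.inter_comm, ← Measure.restrict_restrict hT, ← lintegral_indicator hT]
        congr 1; ext r; simp [G, Set.indicator]
    _ = (∫⁻ r in Set.Ioi 0 ∩ T, ENNReal.ofReal s * (ENNReal.ofReal |(-(r / s))| * g (f r)))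
          * ENNReal.ofReal (2 * Real.pi) := by
        congr 1
        refine setLIntegral_congr_fun hmeas fun r hr => ?_
        have hr0 : 0 < r := hr.1
        rw [← mul_assoc, ← ENNReal.ofReal_mul hs.le, abs_neg, abs_of_pos (by positivity),
          mul_div_cancel₀ _ hs.ne']
    _ = ENNReal.ofReal (2 * Real.pi * s) * ∫⁻ h in f '' (Set.Ioi 0 ∩ T), g h := by
        rw [lintegral_const_mul' _ _ ENNReal.ofReal_ne_top, ← hcov,
          mul_comm (2 * Real.pi) s, ENNReal.ofReal_mul hs.le]
        ring
    _ ≤ _ := by gcongr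

lemma exists_basis {e : E3} (he : ‖e‖ = 1) : ∃ b : OrthonormalBasis (Fin 3) ℝ E3, b 2 = e := by
  have hv : Orthonormal ℝ (({2} : Set (Fin 3)).domRestrict (fun _ => e)) := by
    constructor
    · intro i; simpa using he
    · intro i j hij; exact absurd (Subsingleton.elim i j) hij
  obtain ⟨b, hb⟩ := hv.exists_orthonormalBasis_extension_of_card_eq (by simp)
  exact ⟨b, hb 2 rfl⟩

lemma hemisphere_le_height {e : E3} (he : ‖e‖ = 1) {s : ℝ} (hs : 0 < s) {g : ℝ → ENNReal}
    (hg : Measurable g) :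
    ∫⁻ y in {y : E3 | ‖y‖ = s ∧ 0 ≤ inner ℝ e y}, g (inner ℝ e y) ∂(Measure.hausdorffMeasure 2)
      ≤ ENNReal.ofReal (392 * Real.pi * s) * ∫⁻ h in Set.Icc 0 s, g h := by
  obtain ⟨b, rfl⟩ := exists_basis he
  refine (hemisphere_le_disk b hs hg).trans
    ((mul_le_mul_right (disk_le_height hs hg) _).trans_eq ?_)
  rw [← mul_assoc, ← ENNReal.ofReal_ofNat, ← ENNReal.ofReal_mul (by norm_num)]
  congr 2; ring

/-- Hat-box bound on the whole sphere, from its two hemispheres. -/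
lemma sphere_le_height {e : E3} (he : ‖e‖ = 1) {s : ℝ} (hs : 0 < s) {g : ℝ → ENNReal}
    (hg : Measurable g) :
    ∫⁻ y in {y : E3 | ‖y‖ = s}, g (inner ℝ e y) ∂(Measure.hausdorffMeasure 2)
      ≤ ENNReal.ofReal (784 * Real.pi * s) * ∫⁻ h in Set.Icc (-s) s, g h := by
  have hcover : {y : E3 | ‖y‖ = s} ⊆ {y : E3 | ‖y‖ = s ∧ 0 ≤ inner ℝ e y}
      ∪ {y : E3 | ‖y‖ = s ∧ 0 ≤ inner ℝ (-e) y} := by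
    intro y hy
    rcases le_total 0 (inner ℝ e y) with h | h
    · exact Or.inl ⟨hy, h⟩
    · exact Or.inr ⟨hy, by rw [inner_neg_left]; linarith⟩
  have h1 := hemisphere_le_height he hs hg
  have h2 := hemisphere_le_height (e := -e) (by rwa [norm_neg]) hs
    (g := fun h => g (-h)) (hg.comp measurable_neg)
  simp only [inner_neg_left, neg_neg] at h2 hcover
  have h3 : ∫⁻ h in Set.Icc 0 s, g (-h) = ∫⁻ h in Set.Icc (-s) 0, g h := by
    have := (Measure.measurePreserving_neg (volume : Measure ℝ)).setLIntegral_comp_preimage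
      (s := Set.Icc (-s) 0) measurableSet_Icc hg
    simpa using this
  rw [h3] at h2
  have m1 : ∫⁻ h in Set.Icc 0 s, g h ≤ ∫⁻ h in Set.Icc (-s) s, g h :=
    lintegral_mono_set (Set.Icc_subset_Icc_left (by linarith))
  have m2 : ∫⁻ h in Set.Icc (-s) 0, g h ≤ ∫⁻ h in Set.Icc (-s) s, g h :=
    lintegral_mono_set (Set.Icc_subset_Icc_right hs.le)
  refine (lintegral_mono_set hcover).trans ((lintegral_union_le _ _ _).trans ?_)
  refine (add_le_add (h1.trans (mul_le_mul_right m1 _))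
    (h2.trans (mul_le_mul_right m2 _))).trans_eq ?_
  rw [← add_mul, ← ENNReal.ofReal_add (by positivity) (by positivity)]
  congr 2; ring

/-- Passing from the height `h` to the distance `ρ = √(a² + s² - 2ah)`, for which `dh = ρ dρ / a`
up to sign. -/
lemma height_le_dist {a s : ℝ} (ha : 0 < a) (hs : 0 < s) (G : ℝ → ENNReal) :
    ∫⁻ h in Set.Icc (-s) s, G (Real.sqrt (a ^ 2 + s ^ 2 - 2 * a * h))
      ≤ ENNReal.ofReal (1 / a) * ∫⁻ ρ in Set.Icc |a - s| (a + s), ENNReal.ofReal ρ * G ρ := by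
  set f : ℝ → ℝ := fun ρ => (a ^ 2 + s ^ 2 - ρ ^ 2) / (2 * a)
  have hnn : ∀ ρ ∈ Set.Icc |a - s| (a + s), 0 ≤ ρ := fun ρ h => (abs_nonneg _).trans h.1
  have hinj : Set.InjOn f (Set.Icc |a - s| (a + s)) := by
    intro r hr r' hr' h
    have : r ^ 2 = r' ^ 2 := by
      simp only [f] at h
      field_simp at h
      linarith
    exact (sq_eq_sq₀ (hnn r hr) (hnn r' hr')).1 this
  have hder : ∀ r ∈ Set.Icc |a - s| (a + s),
      HasDerivWithinAt f (-(r / a)) (Set.Icc |a - s| (a + s)) r := by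
    intro r _
    have := ((hasDerivAt_pow 2 r).const_sub (a ^ 2 + s ^ 2)).div_const (2 * a)
    refine (this.congr_deriv ?_).hasDerivWithinAt
    field_simp; simp
  have hcov := lintegral_image_eq_lintegral_abs_deriv_mul measurableSet_Icc hder hinj
    (fun h => G (Real.sqrt (a ^ 2 + s ^ 2 - 2 * a * h)))
  have himg : Set.Icc (-s) s ⊆ f '' Set.Icc |a - s| (a + s) := by
    rintro h ⟨h1, h2⟩
    have hah : a * h ≤ a * s := by gcongr
    have hah' : a * (-s) ≤ a * h := by gcongr
    have h0 : 0 ≤ a ^ 2 + s ^ 2 - 2 * a * h := by nlinarith [sq_nonneg (a - s)]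
    refine ⟨Real.sqrt (a ^ 2 + s ^ 2 - 2 * a * h), ⟨?_, ?_⟩, ?_⟩
    · refine Real.abs_le_sqrt ?_; nlinarith
    · rw [Real.sqrt_le_left (by positivity)]; nlinarith
    · simp only [f, Real.sq_sqrt h0]; field_simp; ring
  refine (lintegral_mono_set himg).trans_eq ?_
  rw [hcov, ← lintegral_const_mul' _ _ ENNReal.ofReal_ne_top]
  refine setLIntegral_congr_fun measurableSet_Icc fun r hr => ?_
  have hr0 := hnn r hr
  have e : a ^ 2 + s ^ 2 - 2 * a * f r = r ^ 2 := by simp only [f]; field_simp; ring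
  rw [e, Real.sqrt_sq hr0, abs_neg, abs_of_nonneg (by positivity), ← mul_assoc,
    ← ENNReal.ofReal_mul (by positivity)]
  congr 2; ring

/-- Surface integrals over a sphere of functions of the distance to a point `p` reduce to
one-dimensional integrals in that distance. -/
lemma sphere_le_dist {p : E3} (hp : 0 < ‖p‖) {s : ℝ} (hs : 0 < s) {G : ℝ → ENNReal}
    (hG : Measurable G) :
    ∫⁻ y in {y : E3 | ‖y‖ = s}, G ‖p - y‖ ∂(Measure.hausdorffMeasure 2)
      ≤ ENNReal.ofReal (784 * Real.pi * s / ‖p‖) *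
        ∫⁻ ρ in Set.Icc |‖p‖ - s| (‖p‖ + s), ENNReal.ofReal ρ * G ρ := by
  set a := ‖p‖ with ha
  set e : E3 := a⁻¹ • p
  have he : ‖e‖ = 1 := by
    rw [norm_smul, norm_inv, Real.norm_eq_abs, abs_of_pos hp, ← ha, inv_mul_cancel₀ hp.ne']
  have hpe : p = a • e := by rw [smul_inv_smul₀ hp.ne']
  have hmeas : MeasurableSet {y : E3 | ‖y‖ = s} :=
    measurableSet_eq_fun (by fun_prop) measurable_const
  have hpt : ∫⁻ y in {y : E3 | ‖y‖ = s}, G ‖p - y‖ ∂(Measure.hausdorffMeasure 2)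
      = ∫⁻ y in {y : E3 | ‖y‖ = s}, (fun h => G (Real.sqrt (a ^ 2 + s ^ 2 - 2 * a * h)))
        (inner ℝ e y) ∂(Measure.hausdorffMeasure 2) := by
    refine setLIntegral_congr_fun hmeas fun y hy => ?_
    have hy : ‖y‖ = s := hy
    have : ‖p - y‖ ^ 2 = a ^ 2 + s ^ 2 - 2 * a * inner ℝ e y := by
      rw [norm_sub_sq_real, hy, ← ha, hpe, inner_smul_left]
      simp only [conj_trivial]; ring
    simp only
    rw [← this, Real.sqrt_sq (norm_nonneg _)]
  rw [hpt]
  refine (sphere_le_height he hs (by fun_prop)).trans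
    ((mul_le_mul_right (height_le_dist hp hs G) _).trans_eq ?_)
  rw [← mul_assoc, ← ENNReal.ofReal_mul (by positivity)]
  congr 2; ring

/-! ### The radial integral -/

lemma sphereInt_le {t : ℝ} {x : E3} {μ lam J : ℝ} (ht : 0 < t) (hx : 0 < ‖x‖) (hlam : lam < 1)
    (hJ : 0 ≤ J)
    (h : ∫⁻ ρ in Set.Icc |‖x‖ / t - (1 - lam)| (min (‖x‖ / t + (1 - lam)) (lam - t⁻¹)),
      ENNReal.ofReal ρ * ENNReal.ofReal ((lam - ρ) ^ (-(1 - μ))) ≤ ENNReal.ofReal J) :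
    sphereInt t x μ lam ≤ 784 * Real.pi * (1 - lam) / (‖x‖ / t) * J := by
  have hs : 0 < 1 - lam := by linarith
  have hpn : ‖t⁻¹ • x‖ = ‖x‖ / t := by
    rw [norm_smul, norm_inv, Real.norm_eq_abs, abs_of_pos ht, inv_mul_eq_div]
  have ha : 0 < ‖x‖ / t := by positivity
  set p : E3 := t⁻¹ • x with hp
  set f : E3 → ℝ := fun y => (lam - ‖p - y‖) ^ (-(1 - μ))
  set G : ℝ → ENNReal := (Set.Iic (lam - t⁻¹)).indicator
    (fun ρ => ENNReal.ofReal ((lam - ρ) ^ (-(1 - μ))))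
  have hG : Measurable G := Measurable.indicator (by fun_prop) measurableSet_Iic
  have mS : MeasurableSet {y : E3 | ‖y‖ = 1 - lam} :=
    measurableSet_eq_fun (by fun_prop) measurable_const
  have mB : MeasurableSet {y : E3 | ‖p - y‖ ≤ lam - t⁻¹} :=
    measurableSet_le (by fun_prop) measurable_const
  have hset : {y : E3 | ‖y‖ = 1 - lam ∧ ‖p - y‖ ≤ lam - t⁻¹}
      = {y : E3 | ‖p - y‖ ≤ lam - t⁻¹} ∩ {y : E3 | ‖y‖ = 1 - lam} := by
    ext y; exact and_comm
  have hnn : ∀ y ∈ {y : E3 | ‖p - y‖ ≤ lam - t⁻¹} ∩ {y : E3 | ‖y‖ = 1 - lam}, 0 ≤ f y := by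
    rintro y ⟨hy, -⟩
    have hy : ‖p - y‖ ≤ lam - t⁻¹ := hy
    have : 0 < t⁻¹ := by positivity
    exact Real.rpow_nonneg (by linarith) _
  have hI : sphereInt t x μ lam = (∫⁻ y in {y : E3 | ‖p - y‖ ≤ lam - t⁻¹} ∩
      {y : E3 | ‖y‖ = 1 - lam}, ENNReal.ofReal (f y) ∂(Measure.hausdorffMeasure 2)).toReal := by
    unfold sphereInt
    rw [← hp, hset]
    refine integral_eq_lintegral_of_nonneg_ae ?_ (Measurable.aestronglyMeasurable (by fun_prop))
    exact (ae_restrict_iff' (mB.inter mS)).2 (Filter.Eventually.of_forall hnn)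
  have hL : ∫⁻ y in {y : E3 | ‖p - y‖ ≤ lam - t⁻¹} ∩ {y : E3 | ‖y‖ = 1 - lam},
      ENNReal.ofReal (f y) ∂(Measure.hausdorffMeasure 2)
      = ∫⁻ y in {y : E3 | ‖y‖ = 1 - lam}, G ‖p - y‖ ∂(Measure.hausdorffMeasure 2) := by
    rw [← Measure.restrict_restrict mB, ← lintegral_indicator mB]
    rfl
  have hR : ∫⁻ ρ in Set.Icc |‖p‖ - (1 - lam)| (‖p‖ + (1 - lam)), ENNReal.ofReal ρ * G ρ
      = ∫⁻ ρ in Set.Icc |‖x‖ / t - (1 - lam)| (min (‖x‖ / t + (1 - lam)) (lam - t⁻¹)),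
      ENNReal.ofReal ρ * ENNReal.ofReal ((lam - ρ) ^ (-(1 - μ))) := by
    have : Set.Icc |‖x‖ / t - (1 - lam)| (min (‖x‖ / t + (1 - lam)) (lam - t⁻¹))
        = Set.Iic (lam - t⁻¹) ∩ Set.Icc |‖x‖ / t - (1 - lam)| (‖x‖ / t + (1 - lam)) := by
      ext ρ; simp only [Set.mem_Icc, Set.mem_inter_iff, Set.mem_Iic, le_min_iff]; tauto
    rw [this, ← Measure.restrict_restrict measurableSet_Iic,
      ← lintegral_indicator measurableSet_Iic, hpn]
    congr 1; ext ρ; simp [G, Set.indicator]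
  rw [hI, hL]
  refine ENNReal.toReal_le_of_le_ofReal (by positivity) ?_
  have hpp : 0 < ‖p‖ := by rw [hpn]; exact ha
  refine (sphere_le_dist hpp hs hG).trans ?_
  rw [hR, hpn, ENNReal.ofReal_mul (p := 784 * Real.pi * (1 - lam) / (‖x‖ / t)) (by positivity)]
  exact mul_le_mul_right h _

/-- The singular weight `(lam - ρ) ^ (μ - 1)` is integrable up to `ρ = lam`, at the cost `1 / μ`. -/
lemma radial_le {c d lam μ : ℝ} (hμ : 0 < μ) (hc : 0 ≤ c) (hcl : c ≤ lam) (hd : d ≤ lam) :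
    ∫⁻ ρ in Set.Icc c d, ENNReal.ofReal ρ * ENNReal.ofReal ((lam - ρ) ^ (-(1 - μ)))
      ≤ ENNReal.ofReal (lam * ((lam - c) ^ μ / μ)) := by
  have hr : -1 < -(1 - μ) := by linarith
  have hii : IntervalIntegrable (fun ρ : ℝ => (lam - ρ) ^ (-(1 - μ))) volume c lam := by
    have := (intervalIntegral.intervalIntegrable_rpow' (a := lam - c) (b := 0) hr).comp_sub_left lam
    simpa using this
  have hval : ∫ ρ in c..lam, (lam - ρ) ^ (-(1 - μ)) = (lam - c) ^ μ / μ := by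
    rw [intervalIntegral.integral_comp_sub_left (fun u => u ^ (-(1 - μ))) lam, sub_self,
      integral_rpow (Or.inl hr)]
    have : -(1 - μ) + 1 = μ := by ring
    rw [this, Real.zero_rpow hμ.ne', sub_zero]
  have hl : ∫⁻ ρ in Set.Ioc c lam, ENNReal.ofReal ((lam - ρ) ^ (-(1 - μ)))
      = ENNReal.ofReal ((lam - c) ^ μ / μ) := by
    rw [← hval, intervalIntegral.integral_of_le hcl, ofReal_integral_eq_lintegral_ofReal hii.1]
    refine (ae_restrict_iff' measurableSet_Ioc).2 (Filter.Eventually.of_forall ?_)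
    rintro ρ ⟨-, h⟩
    exact Real.rpow_nonneg (by linarith) _
  calc _ ≤ ∫⁻ ρ in Set.Icc c d, ENNReal.ofReal lam *
        ENNReal.ofReal ((lam - ρ) ^ (-(1 - μ))) := by
        refine setLIntegral_mono' measurableSet_Icc fun ρ hρ => ?_
        gcongr
        exact hρ.2.trans hd
    _ ≤ ∫⁻ ρ in Set.Icc c lam, ENNReal.ofReal lam *
        ENNReal.ofReal ((lam - ρ) ^ (-(1 - μ))) :=
        lintegral_mono_set (Set.Icc_subset_Icc_right hd)
    _ = ENNReal.ofReal (lam * ((lam - c) ^ μ / μ)) := by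
        rw [lintegral_const_mul' _ _ ENNReal.ofReal_ne_top, ← setLIntegral_congr Ioc_ae_eq_Icc,
          hl, ← ENNReal.ofReal_mul (hc.trans hcl)]

/-- Away from the singularity the weight is bounded by its value at the right endpoint. -/
lemma radial_le_const {c d lam μ : ℝ} (hμ : μ ≤ 1) (hc : 0 ≤ c) (hcd : c ≤ d) (hd : d < lam) :
    ∫⁻ ρ in Set.Icc c d, ENNReal.ofReal ρ * ENNReal.ofReal ((lam - ρ) ^ (-(1 - μ)))
      ≤ ENNReal.ofReal (d * (lam - d) ^ (-(1 - μ)) * (d - c)) := by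
  have hw : 0 ≤ (lam - d) ^ (-(1 - μ)) := Real.rpow_nonneg (by linarith) _
  calc _ ≤ ∫⁻ ρ in Set.Icc c d, ENNReal.ofReal (d * (lam - d) ^ (-(1 - μ))) := by
        refine setLIntegral_mono' measurableSet_Icc fun ρ hρ => ?_
        rw [← ENNReal.ofReal_mul (hc.trans hρ.1)]
        refine ENNReal.ofReal_le_ofReal (mul_le_mul hρ.2 ?_ ?_ (hc.trans hcd))
        · exact Real.rpow_le_rpow_of_nonpos (by linarith) (by linarith [hρ.2]) (by linarith)
        · exact Real.rpow_nonneg (by linarith [hρ.2]) _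
    _ = _ := by
        rw [setLIntegral_const, Real.volume_Icc,
          ← ENNReal.ofReal_mul (mul_nonneg (hc.trans hcd) hw)]

/-- The bound shared by the two regimes in which the weight is integrated up to its singularity. -/
lemma sphereInt_le_of_singular {t : ℝ} {x : E3} {μ lam : ℝ} (ht : 0 < t) (hx : 0 < ‖x‖)
    (hμ : 0 < μ) (hlam : lam < 1) (hc : |‖x‖ / t - (1 - lam)| ≤ lam)
    (hc' : lam - |‖x‖ / t - (1 - lam)| ≤ (t - ‖x‖) / t) :
    sphereInt t x μ lam
      ≤ 784 * Real.pi * (lam * t * (1 - lam) / (μ * ‖x‖)) * ((t - ‖x‖) / t) ^ μ := by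
  have hl0 : 0 ≤ lam := (abs_nonneg _).trans hc
  have hs : 0 < 1 - lam := by linarith
  have hti : 0 < t⁻¹ := by positivity
  have hsub : 0 ≤ lam - |‖x‖ / t - (1 - lam)| := by linarith
  have hpow := Real.rpow_le_rpow hsub hc' hμ.le
  refine (sphereInt_le ht hx hlam (by positivity)
    (radial_le hμ (abs_nonneg _) hc ((min_le_right _ _).trans (by linarith)))).trans ?_
  calc _ ≤ 784 * Real.pi * (1 - lam) / (‖x‖ / t) * (lam * (((t - ‖x‖) / t) ^ μ / μ)) := by gcongr
    _ = _ := by field_simp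

/-! ### The estimates -/

/-- Lemma 3.2: estimates for the spherical integral `I(λ)`. -/
theorem sphere_integral_estimates :
    ∃ C : ℝ, 0 < C ∧
      ∀ (t : ℝ) (x : EuclideanSpace ℝ (Fin 3)) (μ : ℝ),
        2 ≤ t → 0 < ‖x‖ → ‖x‖ < t - 1 → 0 < μ → μ ≤ 1/2 →
        (∀ lam : ℝ, (t - ‖x‖ + 1) / (2*t) ≤ lam → lam ≤ (t + ‖x‖ + 1) / (2*t) →
          sphereInt t x μ lam
            ≤ C * (lam * t * (1 - lam) / (μ * ‖x‖)) * ((t - ‖x‖) / t) ^ μ) ∧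
        ((t + ‖x‖ + 1) / (2*t) ≤ (t - ‖x‖) / t →
          ∀ lam : ℝ, (t + ‖x‖ + 1) / (2*t) ≤ lam → lam ≤ (t - ‖x‖) / t →
            sphereInt t x μ lam
              ≤ C * (1 - lam) * ((t + ‖x‖) / t - lam)
                  * (2 * lam - (t + ‖x‖) / t) ^ (-1 + μ)) ∧
        (∀ lam : ℝ, max ((t - ‖x‖) / t) ((t + ‖x‖ + 1) / (2*t)) ≤ lam → lam ≤ 1 →
          sphereInt t x μ lam
            ≤ C * ((1 - lam) * t / (μ * ‖x‖)) * ((t - ‖x‖) / t) ^ μ) ∧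
        (∀ lam : ℝ, 0 < lam → lam ≤ (t - ‖x‖ + 1) / (2*t) →
          sphereInt t x μ lam = 0) := by
  refine ⟨1568 * Real.pi, by positivity, fun t x μ ht hx hxt hμ hμ2 => ?_⟩
  have ht0 : 0 < t := by linarith
  set a := ‖x‖ / t with ha
  have ha0 : 0 < a := by positivity
  have hti : 0 < t⁻¹ := by positivity
  have hti2 : t⁻¹ ≤ 1 / 2 := by
    rw [inv_le_comm₀ ht0 (by norm_num)]; linarith
  have hA : a < 1 - t⁻¹ := by
    rw [ha, div_lt_iff₀ ht0, sub_mul, inv_mul_cancel₀ ht0.ne']; linarith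
  have e1 : (t - ‖x‖ + 1) / (2 * t) = (1 - a + t⁻¹) / 2 := by rw [ha]; field_simp
  have e2 : (t + ‖x‖ + 1) / (2 * t) = (1 + a + t⁻¹) / 2 := by rw [ha]; field_simp
  have e3 : (t - ‖x‖) / t = 1 - a := by rw [ha]; field_simp
  have e4 : (t + ‖x‖) / t = 1 + a := by rw [ha]; field_simp
  have hpow : 0 ≤ ((t - ‖x‖) / t) ^ μ := Real.rpow_nonneg (by rw [e3]; linarith) _
  refine ⟨fun lam h1 h2 => ?_, fun _ lam h1 h2 => ?_, fun lam h1 h2 => ?_, fun lam h0 h1 => ?_⟩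
  · rw [e1] at h1
    rw [e2] at h2
    have hl1 : lam < 1 := by linarith
    have hl0 : 0 ≤ lam := by linarith
    have hs : 0 < 1 - lam := by linarith
    refine (sphereInt_le_of_singular ht0 hx hμ hl1 ?_ ?_).trans ?_
    · rw [← ha, abs_le]; constructor <;> linarith
    · rw [e3, ← ha]
      linarith [le_abs_self (a - (1 - lam))]
    · gcongr
      norm_num
  · rw [e2] at h1
    rw [e3] at h2
    rw [e4]
    have hl1 : lam < 1 := by linarith
    have hs : 0 < 1 - lam := by linarith
    have habs : |a - (1 - lam)| = 1 - lam - a := by rw [abs_of_nonpos (by linarith)]; ring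
    have hmin : min (a + (1 - lam)) (lam - t⁻¹) = a + (1 - lam) := min_eq_left (by linarith)
    have hw : 0 ≤ (lam - (a + (1 - lam))) ^ (-(1 - μ)) := Real.rpow_nonneg (by linarith) _
    have hJ : 0 ≤ (a + (1 - lam)) * (lam - (a + (1 - lam))) ^ (-(1 - μ))
        * (a + (1 - lam) - (1 - lam - a)) :=
      mul_nonneg (mul_nonneg (by linarith) hw) (by linarith)
    refine (sphereInt_le ht0 hx hl1 hJ ?_).trans_eq ?_
    · rw [← ha, habs, hmin]
      exact radial_le_const (by linarith) (by linarith) (by linarith) (by linarith)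
    · have e5 : lam - (a + (1 - lam)) = 2 * lam - (1 + a) := by ring
      have e6 : -(1 - μ) = -1 + μ := by ring
      rw [← ha, e5, e6]
      field_simp
      ring
  · have h3 := (le_max_left _ _).trans h1
    have h4 := (le_max_right _ _).trans h1
    rw [e3] at h3
    rw [e2] at h4
    rcases h2.eq_or_lt with rfl | hl1
    ·
      -- The sphere degenerates to the origin, a null set.
      have hz : {y : E3 | ‖y‖ = 1 - 1 ∧ ‖t⁻¹ • x - y‖ ≤ 1 - t⁻¹} ⊆ {0} := by
        rintro y ⟨hy, -⟩
        simpa using hy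
      have hnull : Measure.hausdorffMeasure 2
          {y : E3 | ‖y‖ = 1 - 1 ∧ ‖t⁻¹ • x - y‖ ≤ 1 - t⁻¹} = 0 := by
        have := Measure.nullSingletonClass_hausdorff E3 (d := 2) (by norm_num)
        exact measure_mono_null hz (measure_singleton _)
      have : sphereInt t x μ 1 = 0 := by
        unfold sphereInt
        rw [Measure.restrict_eq_zero.2 hnull, integral_zero_measure]
      rw [this]
      simp
    · have hs : 0 < 1 - lam := by linarith
      have hl0 : 0 ≤ lam := by linarith
      refine (sphereInt_le_of_singular ht0 hx hμ hl1 ?_ ?_).trans ?_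
      · rw [← ha, abs_le]; constructor <;> linarith
      · rw [e3, ← ha]
        linarith [le_abs_self (a - (1 - lam))]
      · have hle : lam * t ≤ t := mul_le_of_le_one_left ht0.le h2
        have hnum : lam * t * (1 - lam) ≤ (1 - lam) * t := by nlinarith
        gcongr
        norm_num
  · rw [e1] at h1
    have hl1 : lam < 1 := by linarith
    refine le_antisymm ?_ ?_
    · refine (sphereInt_le ht0 hx hl1 le_rfl ?_).trans_eq (mul_zero _)
      -- The range of distances is at most one point.
      have hsub : (Set.Icc |a - (1 - lam)| (min (a + (1 - lam)) (lam - t⁻¹))).Subsingleton := by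
        rw [Set.subsingleton_Icc_iff]
        exact (min_le_right _ _).trans (by linarith [neg_abs_le (a - (1 - lam))])
      rw [setLIntegral_measure_zero _ _ (hsub.measure_zero volume)]
      exact zero_le
    · unfold sphereInt
      refine setIntegral_nonneg ?_ ?_
      · have m1 : MeasurableSet {y : E3 | ‖y‖ = 1 - lam} :=
          measurableSet_eq_fun (by fun_prop) measurable_const
        have m2 : MeasurableSet {y : E3 | ‖t⁻¹ • x - y‖ ≤ lam - t⁻¹} :=
          measurableSet_le (by fun_prop) measurable_const
        exact m1.inter m2
      · rintro y ⟨-, hy⟩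
        exact Real.rpow_nonneg (by linarith) _
end
end
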